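/- For every integer k ≥ 13, TSP/k-Opt has the all-exp property: there are infinitely many pairs of a TSP instance and an initial tour such that every maximal improving k-swap sequence starting from the initial tour has length exponential in the number of vertices of the instance; equivalently, the k-Opt algorithm started from this tour needs an exponential number of iterations under every pivot rule. -/

import Mathlib

/-!
Statement 1: For every integer k ≥ 13, TSP/k-Opt has the all-exp property.

A TSP instance on `Fin n` is given by a nonnegative weight function on `Sym2 (Fin n)`
(the underlying graph being complete). A tour is a Hamiltonian cycle, modelled as a
permutation which is a single cycle through all vertices.
-/

open Finset

variable {V : Type*} [Fintype V] [DecidableEq V]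

/-- A tour: a permutation of the vertices forming one cycle through all of them. -/
def IsTour (σ : Equiv.Perm V) : Prop :=
  σ.IsCycle ∧ σ.support = Finset.univ

/-- The set of edges used by a tour. -/
def tourEdges (σ : Equiv.Perm V) : Finset (Sym2 V) :=
  Finset.univ.image fun v => s(v, σ v)

/-- The total weight of a tour. -/
def tourWeight (w : Sym2 V → ℝ) (σ : Equiv.Perm V) : ℝ :=
  ∑ e ∈ tourEdges σ, w e

/-- A `k`-swap: replace at most `k` edges of the tour (with equally many new edges)
so that again a tour results. -/
def IsKSwap (k : ℕ) (σ σ' : Equiv.Perm V) : Prop :=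
  IsTour σ' ∧ (tourEdges σ \ tourEdges σ').card ≤ k

/-- An improving `k`-swap strictly decreases the total tour weight. -/
def ImprovingKSwap (w : Sym2 V → ℝ) (k : ℕ) (σ σ' : Equiv.Perm V) : Prop :=
  IsKSwap k σ σ' ∧ tourWeight w σ' < tourWeight w σ

/-- A k-Opt locally optimal tour: no improving `k`-swap exists. -/
def IsLocalOpt (w : Sym2 V → ℝ) (k : ℕ) (σ : Equiv.Perm V) : Prop :=
  ∀ σ', ¬ ImprovingKSwap w k σ σ'

/-- Improving `k`-swap sequences starting from a given tour. -/
def ImprovingSwapSeq (w : Sym2 V → ℝ) (k : ℕ) : Equiv.Perm V → List (Equiv.Perm V) → Prop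
  | _, [] => True
  | σ, τ :: l => ImprovingKSwap w k σ τ ∧ ImprovingSwapSeq w k τ l

/-- A maximal improving `k`-swap sequence: an improving sequence ending at a
k-Opt locally optimal tour. -/
def MaximalImprovingSwapSeq (w : Sym2 V → ℝ) (k : ℕ) (σ₀ : Equiv.Perm V)
    (l : List (Equiv.Perm V)) : Prop :=
  ImprovingSwapSeq w k σ₀ l ∧ IsLocalOpt w k ((σ₀ :: l).getLast (List.cons_ne_nil _ _))

/-- The all-exp property for TSP/k-Opt: there is a constant `c > 1` such that for
infinitely many sizes `n` there are a TSP instance on `n` vertices and an initial tour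
from which every maximal improving `k`-swap sequence has length at least `c ^ n`,
i.e. the k-Opt algorithm needs exponentially many iterations under every pivot rule. -/
def TSPKOptAllExp (k : ℕ) : Prop :=
  ∃ c : ℝ, 1 < c ∧
    ∀ N : ℕ, ∃ n : ℕ, N ≤ n ∧
      ∃ (w : Sym2 (Fin n) → ℝ) (τ₀ : Equiv.Perm (Fin n)),
        (∀ e, 0 ≤ w e) ∧ IsTour τ₀ ∧
        ∀ l : List (Equiv.Perm (Fin n)),
          MaximalImprovingSwapSeq w k τ₀ l → c ^ n ≤ (l.length : ℝ)

/-!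
Local search on tours simulates local search on Boolean assignments.

Let an energy of assignments be a sum of costs of consecutive values along a closed walk which
visits each variable `m + 1` times. Replacing every visit by a path on six vertices, entered and
left at one of two ports according to the value of the variable, turns assignments into tours and
energy into weight, while all other tours are too heavy to matter. To flip a variable, a tour
exchanges at most `4 * (m + 1)` edges; tours of assignments that differ in two or more variables
differ in at least `6 * (m + 1)` edges. So for `4 * (m + 1) ≤ k < 6 * (m + 1)` the improving
`k`-swaps are exactly the improving flips of single variables.

The energy to which this is applied makes a binary counter out of levels of six variables each.
Every level runs through a cycle of twenty states, in the course of which it drives the level below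
through two cycles. Whichever flip is improving, it moves some level on in its cycle. Weighting the
levels by powers of two gives a rank which is exponential at the start, drops by at most one with
each improving flip, and is exhausted at every local minimum.
-/

theorem mem_of_mapsTo_of_sameCycle {α : Type*} [Finite α] {σ : Equiv.Perm α} {x y : α}
    (h : σ.SameCycle x y) {S : Set α} (hS : Set.MapsTo σ S S) (hx : x ∈ S) : y ∈ S := by
  obtain ⟨n, rfl⟩ := h.exists_nat_pow_eq
  rw [Equiv.Perm.coe_pow]
  exact hS.iterate n hx

/-! ### Tours -/

section Tours

variable {σ : Equiv.Perm V} {x y : V}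

theorem IsTour.apply_ne (h : IsTour σ) (x : V) : σ x ≠ x :=
  Equiv.Perm.mem_support.1 (h.2 ▸ mem_univ x)

theorem isTour_iff : IsTour σ ↔ Nontrivial V ∧ ∀ x y, σ.SameCycle x y := by
  refine ⟨fun h => ?_, fun ⟨_, h⟩ => ?_⟩
  · obtain ⟨x, hx, -⟩ := h.1
    exact ⟨⟨σ x, x, hx⟩, fun x y => h.1.sameCycle (h.apply_ne x) (h.apply_ne y)⟩
  · have apply_ne (x : V) : σ x ≠ x := fun hx => by
      obtain ⟨y, hy⟩ := exists_ne x
      exact hy ((h x y).eq_of_left hx).symm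
    obtain ⟨x, -⟩ := exists_pair_ne V
    exact ⟨⟨x, apply_ne x, fun y _ => h x y⟩, eq_univ_of_forall fun x => by simp [apply_ne x]⟩

theorem IsTour.mem_of_mapsTo (h : IsTour σ) {S : Set V} (hS : Set.MapsTo σ S S) (hx : x ∈ S)
    (y : V) : y ∈ S :=
  mem_of_mapsTo_of_sameCycle ((isTour_iff.1 h).2 x y) hS hx

theorem mem_tourEdges : s(x, y) ∈ tourEdges σ ↔ σ x = y ∨ σ y = x := by
  simp only [tourEdges, mem_image, mem_univ, true_and, Sym2.eq_iff]
  grind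

theorem IsTour.apply_apply_ne (h : IsTour σ) (hV : 3 ≤ Fintype.card V) (x : V) :
    σ (σ x) ≠ x := by
  intro hx
  have hmem (y : V) : y ∈ ({x, σ x} : Set V) :=
    h.mem_of_mapsTo (x := x) (by rintro z (rfl | rfl) <;> simp [hx]) (by simp) y
  have hle : Fintype.card V ≤ ({x, σ x} : Finset V).card :=
    card_le_card fun y _ => by simpa using hmem y
  have := card_le_two (a := x) (b := σ x)
  omega

theorem IsTour.injective_mk_apply (h : IsTour σ) (hV : 3 ≤ Fintype.card V) :
    Function.Injective fun v => s(v, σ v) := by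
  intro v w hvw
  rcases Sym2.eq_iff.1 hvw with ⟨hv, -⟩ | ⟨hv, hw⟩
  · exact hv
  · exact absurd (by rw [← hv, hw]) (h.apply_apply_ne hV w)

theorem IsTour.card_tourEdges (h : IsTour σ) (hV : 3 ≤ Fintype.card V) :
    (tourEdges σ).card = Fintype.card V := by
  rw [tourEdges, card_image_of_injective _ (h.injective_mk_apply hV), card_univ]

theorem IsTour.existsUnique_neighbor_ne (h : IsTour σ) (hV : 3 ≤ Fintype.card V)
    (hxy : s(x, y) ∈ tourEdges σ) : ∃! z, z ≠ y ∧ s(x, z) ∈ tourEdges σ := by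
  have hne : σ x ≠ σ.symm x := fun hx => h.apply_apply_ne hV x (by rw [hx, σ.apply_symm_apply])
  have hmem (v : V) : s(x, v) ∈ tourEdges σ ↔ σ x = v ∨ σ.symm x = v := by
    rw [mem_tourEdges, σ.symm_apply_eq, eq_comm (a := x)]
  rcases (hmem y).1 hxy with rfl | rfl
  · exact ⟨σ.symm x, by grind, by grind⟩
  · exact ⟨σ x, by grind, by grind⟩

theorem IsTour.tourWeight_eq_sum (h : IsTour σ) (hV : 3 ≤ Fintype.card V) (w : Sym2 V → ℝ) :
    tourWeight w σ = ∑ v, w s(v, σ v) := by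
  rw [tourWeight, tourEdges, sum_image (h.injective_mk_apply hV).injOn]

end Tours

/-! ### Improving swap sequences -/

section Sequences

variable {w : Sym2 V → ℝ} {k : ℕ} {σ τ : Equiv.Perm V} {l : List (Equiv.Perm V)}

theorem maximalImprovingSwapSeq_nil : MaximalImprovingSwapSeq w k σ [] ↔ IsLocalOpt w k σ := by
  simp [MaximalImprovingSwapSeq, ImprovingSwapSeq]

theorem maximalImprovingSwapSeq_cons : MaximalImprovingSwapSeq w k σ (τ :: l) ↔
    ImprovingKSwap w k σ τ ∧ MaximalImprovingSwapSeq w k τ l := by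
  simp [MaximalImprovingSwapSeq, ImprovingSwapSeq, and_assoc]

theorem MaximalImprovingSwapSeq.le_length {rank : Equiv.Perm V → ℕ → Prop}
    (hstep : ∀ σ τ n, rank σ n → ImprovingKSwap w k σ τ → ∃ m, rank τ m ∧ n ≤ m + 1)
    (hopt : ∀ σ n, rank σ n → IsLocalOpt w k σ → n = 0) {n : ℕ} (hn : rank σ n)
    (h : MaximalImprovingSwapSeq w k σ l) : n ≤ l.length := by
  induction l generalizing σ n with
  | nil => exact (hopt σ n hn (maximalImprovingSwapSeq_nil.1 h)).le
  | cons τ l ih =>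
    obtain ⟨hτ, hl⟩ := maximalImprovingSwapSeq_cons.1 h
    obtain ⟨m, hm, hnm⟩ := hstep σ τ n hn hτ
    exact hnm.trans (Nat.succ_le_succ (ih hm hl))

end Sequences

section Transport

theorem sameCycle_permCongr {α β : Type*} (e : α ≃ β) (σ : Equiv.Perm α) {x y : β} :
    (e.permCongr σ).SameCycle x y ↔ σ.SameCycle (e.symm x) (e.symm y) := by
  refine exists_congr fun i => ?_
  rw [← Equiv.permCongrHom_coe, ← map_zpow, Equiv.permCongrHom_coe, Equiv.permCongr_apply,
    Equiv.eq_symm_apply]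

variable {W : Type*} [Fintype W] [DecidableEq W] (e : V ≃ W) (w : Sym2 V → ℝ) (k : ℕ)
  (σ τ : Equiv.Perm V)

theorem isTour_permCongr : IsTour (e.permCongr σ) ↔ IsTour σ := by
  simp only [isTour_iff, sameCycle_permCongr, e.nontrivial_congr, e.symm.forall_congr_right]
  rw [e.symm.forall_congr_right (q := fun x => ∀ y, σ.SameCycle x y)]

theorem tourEdges_permCongr :
    tourEdges (e.permCongr σ) = (tourEdges σ).image (Sym2.map e) := by
  ext x
  simp [tourEdges, e.symm.exists_congr_left]

theorem tourWeight_permCongr :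
    tourWeight (w ∘ Sym2.map e.symm) (e.permCongr σ) = tourWeight w σ := by
  rw [tourWeight, tourEdges_permCongr, sum_image (Sym2.map.injective e.injective).injOn]
  simp [tourWeight, Sym2.map_map]

theorem improvingKSwap_permCongr :
    ImprovingKSwap (w ∘ Sym2.map e.symm) k (e.permCongr σ) (e.permCongr τ) ↔
      ImprovingKSwap w k σ τ := by
  have hinj := Sym2.map.injective e.injective
  rw [ImprovingKSwap, ImprovingKSwap, IsKSwap, IsKSwap, isTour_permCongr, tourWeight_permCongr,
    tourWeight_permCongr, tourEdges_permCongr, tourEdges_permCongr, ← image_sdiff _ _ hinj,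
    card_image_of_injective _ hinj]

theorem maximalImprovingSwapSeq_permCongr (l : List (Equiv.Perm V)) :
    MaximalImprovingSwapSeq (w ∘ Sym2.map e.symm) k (e.permCongr σ) (l.map e.permCongr) ↔
      MaximalImprovingSwapSeq w k σ l := by
  induction l generalizing σ with
  | nil =>
    simp only [List.map_nil, maximalImprovingSwapSeq_nil, IsLocalOpt,
      ← improvingKSwap_permCongr e w k σ]
    exact e.permCongr.forall_congr_right.symm
  | cons τ l ih =>
    simp only [List.map_cons, maximalImprovingSwapSeq_cons, ih, improvingKSwap_permCongr]

end Transport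

/-! ### The gadget -/

/-- The visits of a closed walk to its nodes, which are Boolean variables: every variable in `U` is
visited `m + 1` times. -/
abbrev Visit (U : Type*) (m : ℕ) := U × Fin (m + 1)

/-- One end of the path by which a tour passes a visit: `false` is the end where the tour enters,
`true` the end where it leaves. -/
abbrev Dart (U : Type*) (m : ℕ) := Visit U m × Bool

/-- The role of a vertex at its dart. The port `x` is meant to be joined to the neighbouring visit
when the variable has the value `x`; the hub lies in the interior of the path. -/
inductive Kind
  | hub
  | port (x : Bool)
  deriving DecidableEq, Fintype

/-- The vertices of the instance: three for each dart, so six for each visit. -/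
abbrev Vertex (U : Type*) (m : ℕ) := Dart U m × Kind

open Kind

section Gadget

variable {U : Type*} {m : ℕ}

/-- Rotation of the darts, running through all `2 * (m + 1)` darts of each variable. It changes
sides after each round so as to commute with exchanging the two darts of every visit. -/
def rot : Equiv.Perm (Dart U m) where
  toFun d := ((d.1.1, d.1.2 + 1), if d.1.2 = Fin.last m then !d.2 else d.2)
  invFun d := ((d.1.1, d.1.2 - 1), if d.1.2 = 0 then !d.2 else d.2)
  left_inv := by
    rintro ⟨⟨u, l⟩, b⟩
    have : l + 1 = 0 ↔ l = Fin.last m := by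
      rw [← Fin.last_add_one, add_left_inj]
    simp only [add_sub_cancel_right, this]
    split_ifs <;> simp
  right_inv := by
    rintro ⟨⟨u, l⟩, b⟩
    have : l - 1 = Fin.last m ↔ l = 0 := by
      rw [sub_eq_iff_eq_add, Fin.last_add_one]
    simp only [sub_add_cancel, this]
    split_ifs <;> simp

theorem rot_apply (d : Dart U m) :
    rot d = ((d.1.1, d.1.2 + 1), if d.1.2 = Fin.last m then !d.2 else d.2) :=
  rfl

theorem sameCycle_rot {d d' : Dart U m} (h : d.1.1 = d'.1.1) : rot.SameCycle d d' := by
  have step (d : Dart U m) : rot.SameCycle d (rot d) := Equiv.Perm.sameCycle_apply_right.2 .rfl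
  suffices H : ∀ u (l : Fin (m + 1)) b, rot.SameCycle ((u, 0), false) ((u, l), b) by
    obtain ⟨⟨u, l⟩, b⟩ := d
    obtain ⟨⟨u', l'⟩, b'⟩ := d'
    obtain rfl : u = u' := h
    exact (H u l b).symm.trans (H u l' b')
  intro u
  have round (l : Fin (m + 1)) (b : Bool) : rot.SameCycle ((u, 0), b) ((u, l), b) := by
    induction l using Fin.induction with
    | zero => exact .rfl
    | succ l ih => simpa [rot_apply, Fin.castSucc_ne_last] using ih.trans (step _)
  have turn : rot.SameCycle ((u, (0 : Fin (m + 1))), false) ((u, 0), true) := by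
    simpa [rot_apply] using (round (Fin.last m) false).trans (step _)
  rintro l (_ | _)
  · exact round l false
  · exact turn.trans (round l true)

/-- The rotation by which the hubs of a variable of value `x` are attached to its ports. -/
def spin (x : Bool) : Equiv.Perm (Dart U m) := if x then rot else 1

theorem spin_fst_fst (x : Bool) (d : Dart U m) : (spin x d).1.1 = d.1.1 := by
  cases x <;> rfl

theorem spin_symm_fst_fst (x : Bool) (d : Dart U m) : ((spin x).symm d).1.1 = d.1.1 := by
  cases x <;> rfl

theorem spin_not_snd (x : Bool) (d : Dart U m) :
    spin x (d.1, !d.2) = ((spin x d).1, !(spin x d).2) := by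
  cases x
  · rfl
  · by_cases h : d.1.2 = Fin.last m <;> simp [spin, rot_apply, h]

/-- The matching of the vertices which every cheap tour contains: the two ports of a dart, and
the two hubs of a visit. -/
def mate : Vertex U m → Vertex U m
  | (d, hub) => ((d.1, !d.2), hub)
  | (d, port x) => (d, port !x)

/-- The edge from a dart to a hub that a tour uses when the variable of the dart is `x`. -/
def spoke (d : Dart U m) (x : Bool) : Sym2 (Vertex U m) := s((d, port !x), (spin x d, hub))

/-- The edge from the visit `τ` to the following visit `nx τ` that a tour uses when their
variables are `x` and `y`. -/
def link (nx : Equiv.Perm (Visit U m)) (τ : Visit U m) (x y : Bool) : Sym2 (Vertex U m) :=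
  s(((τ, true), port x), ((nx τ, false), port y))

/-- The tour for the assignment `fun _ => false`. -/
def falseTour (nx : Equiv.Perm (Visit U m)) : Equiv.Perm (Vertex U m) where
  toFun
    | ((τ, false), port false) => ((τ, false), port true)
    | ((τ, false), port true) => ((τ, false), hub)
    | ((τ, false), hub) => ((τ, true), hub)
    | ((τ, true), hub) => ((τ, true), port true)
    | ((τ, true), port true) => ((τ, true), port false)
    | ((τ, true), port false) => ((nx τ, false), port false)
  invFun
    | ((τ, false), port true) => ((τ, false), port false)
    | ((τ, false), hub) => ((τ, false), port true)
    | ((τ, true), hub) => ((τ, false), hub)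
    | ((τ, true), port true) => ((τ, true), hub)
    | ((τ, true), port false) => ((τ, true), port true)
    | ((τ, false), port false) => ((nx.symm τ, true), port false)
  left_inv := by rintro ⟨⟨τ, _ | _⟩, _ | _ | _⟩ <;> simp
  right_inv := by rintro ⟨⟨τ, _ | _⟩, _ | _ | _⟩ <;> simp

/-- The automorphism of the matching which carries the tour of the assignment `fun _ => false` to
that of the assignment `X`. -/
def relabel (X : U → Bool) : Equiv.Perm (Vertex U m) where
  toFun
    | (d, hub) => (spin (X d.1.1) d, hub)
    | (d, port y) => (d, port (X d.1.1 ^^ y))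
  invFun
    | (d, hub) => ((spin (X d.1.1)).symm d, hub)
    | (d, port y) => (d, port (X d.1.1 ^^ y))
  left_inv := by rintro ⟨d, _ | _⟩ <;> simp [spin_fst_fst]
  right_inv := by rintro ⟨d, _ | _⟩ <;> simp [spin_symm_fst_fst]

/-- The tour for the assignment `X`. -/
def assignTour (nx : Equiv.Perm (Visit U m)) (X : U → Bool) : Equiv.Perm (Vertex U m) :=
  (relabel X).permCongr (falseTour nx)

theorem mate_ne (v : Vertex U m) : mate v ≠ v := by
  rcases v with ⟨⟨τ, b⟩, _ | x⟩ <;> simp [mate]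

theorem mate_mate (v : Vertex U m) : mate (mate v) = v := by
  rcases v with ⟨d, _ | x⟩ <;> simp [mate]

theorem relabel_mate (X : U → Bool) (v : Vertex U m) :
    relabel X (mate v) = mate (relabel X v) := by
  rcases v with ⟨d, _ | x⟩ <;> simp [mate, relabel, spin_not_snd]

theorem map_relabel_mate (X : U → Bool) (v : Vertex U m) :
    Sym2.map (relabel X) s(v, mate v) = s(relabel X v, mate (relabel X v)) := by
  rw [Sym2.map_mk, relabel_mate]

theorem map_relabel_spoke (X : U → Bool) (d : Dart U m) :
    Sym2.map (relabel X) s((d, port true), (d, hub)) = spoke d (X d.1.1) := by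
  simp [spoke, relabel]

theorem card_vertex [Fintype U] : Fintype.card (Vertex U m) = 6 * Fintype.card (Visit U m) := by
  have : Fintype.card Kind = 3 := rfl
  rw [Fintype.card_prod, Fintype.card_prod, Fintype.card_bool, this]
  ring

theorem three_le_card_vertex [Fintype U] [Nonempty U] : 3 ≤ Fintype.card (Vertex U m) := by
  have := Fintype.card_pos (α := Visit U m)
  rw [card_vertex]
  lia

theorem card_visit_ne [Fintype U] (X X' : U → Bool) :
    #{τ : Visit U m | X τ.1 ≠ X' τ.1} = hammingDist X X' * (m + 1) := by
  have : ({τ | X τ.1 ≠ X' τ.1} : Finset (Visit U m)) =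
      ({u | X u ≠ X' u} : Finset U) ×ˢ univ := by
    ext; simp
  rw [this, card_product, card_univ, Fintype.card_fin, hammingDist]

variable (nx : Equiv.Perm (Visit U m))

theorem spoke_inj {d d' : Dart U m} {x x' : Bool} :
    spoke d x = spoke d' x' ↔ d = d' ∧ x = x' := by
  simp only [spoke, Sym2.eq_iff]
  grind

theorem link_inj {τ τ' : Visit U m} {x x' y y' : Bool} :
    link nx τ x y = link nx τ' x' y' ↔ τ = τ' ∧ x = x' ∧ y = y' := by
  simp only [link, Sym2.eq_iff]
  grind

theorem spoke_ne_mate {d : Dart U m} {x : Bool} {v : Vertex U m} :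
    spoke d x ≠ s(v, mate v) := by
  rcases v with ⟨d', _ | _⟩ <;> simp [spoke, mate]

theorem link_ne_mate {τ : Visit U m} {x y : Bool} {v : Vertex U m} :
    link nx τ x y ≠ s(v, mate v) := by
  rcases v with ⟨d', _ | _⟩ <;> grind [link, mate]

theorem link_ne_spoke {τ : Visit U m} {d : Dart U m} {x y z : Bool} :
    link nx τ x y ≠ spoke d z := by
  simp [link, spoke]

theorem map_relabel_link (X : U → Bool) (τ : Visit U m) :
    Sym2.map (relabel X) s(((τ, true), port false), ((nx τ, false), port false)) =
      link nx τ (X τ.1) (X (nx τ).1) := by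
  simp [link, relabel]

theorem sameCycle_falseTour [Finite U] (hnx : ∀ τ τ', nx.SameCycle τ τ') (v v' : Vertex U m) :
    (falseTour nx).SameCycle v v' := by
  have step (v v' : Vertex U m) (h : falseTour nx v = v') : (falseTour nx).SameCycle v v' :=
    h ▸ Equiv.Perm.sameCycle_apply_right.2 .rfl
  have inner : ∀ v : Vertex U m, (falseTour nx).SameCycle ((v.1.1, false), port false) v := by
    rintro ⟨⟨τ, b⟩, c⟩
    have h₁ := step ((τ, false), port false) ((τ, false), port true) rfl
    have h₂ := h₁.trans (step _ ((τ, false), hub) rfl)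
    have h₃ := h₂.trans (step _ ((τ, true), hub) rfl)
    have h₄ := h₃.trans (step _ ((τ, true), port true) rfl)
    have h₅ := h₄.trans (step _ ((τ, true), port false) rfl)
    rcases b with _ | _ <;> rcases c with _ | _ | _ <;> first | assumption | exact .rfl
  have outer (τ τ' : Visit U m) :
      (falseTour nx).SameCycle ((τ, false), port false) ((τ', false), port false) :=
    mem_of_mapsTo_of_sameCycle (hnx τ τ')
      (S := {τ' | (falseTour nx).SameCycle ((τ, false), port false) ((τ', false), port false)})
      (fun τ' (h : Equiv.Perm.SameCycle _ _ _) =>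
        (h.trans (inner ((τ', true), port false))).trans (step _ _ rfl)) .rfl
  exact ((inner v).symm.trans (outer v.1.1 v'.1.1)).trans (inner v')

section Edges

variable [Fintype U] [DecidableEq U] (X X' : U → Bool) {σ : Equiv.Perm (Vertex U m)}

theorem isTour_assignTour [Nonempty U] (hnx : ∀ τ τ', nx.SameCycle τ τ') :
    IsTour (assignTour nx X) := by
  obtain ⟨u⟩ := ‹Nonempty U›
  refine (isTour_permCongr _ _).2 (isTour_iff.2 ⟨?_, sameCycle_falseTour nx hnx⟩)
  exact ⟨_, _, mate_ne (((u, 0), false), hub)⟩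

theorem mem_tourEdges_assignTour {e : Sym2 (Vertex U m)} : e ∈ tourEdges (assignTour nx X) ↔
    (∃ v, e = s(v, mate v)) ∨ (∃ d : Dart U m, e = spoke d (X d.1.1)) ∨
      ∃ τ, e = link nx τ (X τ.1) (X (nx τ).1) := by
  rw [assignTour, tourEdges_permCongr, mem_image]
  constructor
  · rintro ⟨e, he, rfl⟩
    obtain ⟨v, -, rfl⟩ := mem_image.1 he
    rcases v with ⟨⟨τ, _ | _⟩, _ | _ | _⟩
    · exact .inl ⟨_, map_relabel_mate _ _⟩
    · exact .inl ⟨_, map_relabel_mate _ _⟩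
    · exact .inr (.inl ⟨(τ, false), map_relabel_spoke _ _⟩)
    · exact .inr (.inl ⟨(τ, true), Sym2.eq_swap ▸ map_relabel_spoke _ _⟩)
    · exact .inr (.inr ⟨τ, map_relabel_link _ _ τ⟩)
    · exact .inl ⟨_, map_relabel_mate _ _⟩
  · rintro (⟨v, rfl⟩ | ⟨d, rfl⟩ | ⟨τ, rfl⟩)
    · obtain ⟨v, rfl⟩ := (relabel X).surjective v
      refine ⟨s(v, mate v), mem_tourEdges.2 ?_, map_relabel_mate _ v⟩
      rcases v with ⟨⟨τ, _ | _⟩, _ | _ | _⟩ <;> simp [falseTour, mate]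
    · refine ⟨_, mem_tourEdges.2 ?_, map_relabel_spoke _ d⟩
      rcases d with ⟨τ, _ | _⟩ <;> simp [falseTour]
    · exact ⟨_, mem_tourEdges.2 (by simp [falseTour]), map_relabel_link _ _ τ⟩

theorem spoke_mem_tourEdges_assignTour {d : Dart U m} {x : Bool} :
    spoke d x ∈ tourEdges (assignTour nx X) ↔ X d.1.1 = x := by
  simp only [mem_tourEdges_assignTour, spoke_ne_mate, (link_ne_spoke _).symm, spoke_inj]
  grind

theorem link_mem_tourEdges_assignTour {τ : Visit U m} {x y : Bool} :
    link nx τ x y ∈ tourEdges (assignTour nx X) ↔ X τ.1 = x ∧ X (nx τ).1 = y := by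
  simp only [mem_tourEdges_assignTour, link_ne_mate, link_ne_spoke, link_inj]
  grind

theorem card_sdiff_assignTour_le :
    #(tourEdges (assignTour nx X) \ tourEdges (assignTour nx X')) ≤
      4 * (hammingDist X X' * (m + 1)) := by
  rw [← card_visit_ne]
  set S : Finset (Visit U m) := {τ | X τ.1 ≠ X' τ.1} with hS
  have hsub : tourEdges (assignTour nx X) \ tourEdges (assignTour nx X') ⊆
      ((S ×ˢ univ).image fun d : Dart U m => spoke d (X d.1.1)) ∪
        (S ∪ S.image nx.symm).image fun τ => link nx τ (X τ.1) (X (nx τ).1) := by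
    intro e he
    obtain ⟨he, he'⟩ := mem_sdiff.1 he
    rcases (mem_tourEdges_assignTour nx X).1 he with ⟨v, rfl⟩ | ⟨d, rfl⟩ | ⟨τ, rfl⟩
    · exact absurd ((mem_tourEdges_assignTour nx X').2 (.inl ⟨v, rfl⟩)) he'
    · rw [spoke_mem_tourEdges_assignTour] at he'
      exact mem_union_left _ (mem_image_of_mem _ (by simpa [hS] using Ne.symm he'))
    · rw [link_mem_tourEdges_assignTour] at he'
      refine mem_union_right _ (mem_image_of_mem _ ?_)
      have : nx.symm (nx τ) = τ := nx.symm_apply_apply τ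
      grind
  calc _ ≤ #(S ×ˢ (univ : Finset Bool)) + (#S + #S) := (card_le_card hsub).trans <|
        (card_union_le _ _).trans <| add_le_add card_image_le <| card_image_le.trans <|
          (card_union_le _ _).trans <| add_le_add_right card_image_le _
    _ = 4 * #S := by rw [card_product, card_univ, Fintype.card_bool]; ring

theorem le_card_sdiff_assignTour : 3 * (hammingDist X X' * (m + 1)) ≤
    #(tourEdges (assignTour nx X) \ tourEdges (assignTour nx X')) := by
  rw [← card_visit_ne]
  set S : Finset (Visit U m) := {τ | X τ.1 ≠ X' τ.1}
  have hdisj : Disjoint ((S ×ˢ univ).image fun d : Dart U m => spoke d (X d.1.1))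
      (S.image fun τ => link nx τ (X τ.1) (X (nx τ).1)) := by
    simp only [disjoint_left, mem_image]
    rintro _ ⟨d, -, rfl⟩ ⟨τ, -, h⟩
    exact link_ne_spoke nx h
  calc 3 * #S = #(S ×ˢ (univ : Finset Bool)) + #S := by
        rw [card_product, card_univ, Fintype.card_bool]; ring
    _ = #(((S ×ˢ univ).image fun d : Dart U m => spoke d (X d.1.1)) ∪
          S.image fun τ => link nx τ (X τ.1) (X (nx τ).1)) := by
        rw [card_union_of_disjoint hdisj,
          card_image_of_injective _ fun _ _ h => (spoke_inj.1 h).1,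
          card_image_of_injective _ fun _ _ h => ((link_inj nx).1 h).1]
    _ ≤ _ := card_le_card fun e he => by
        rcases mem_union.1 he with he | he <;> obtain ⟨x, hx, rfl⟩ := mem_image.1 he
        · simp only [mem_sdiff, spoke_mem_tourEdges_assignTour]
          grind
        · simp only [mem_sdiff, link_mem_tourEdges_assignTour]
          grind

variable {X nx}

/-- The dart joined to the dart `d` by the links. -/
def opp (nx : Equiv.Perm (Visit U m)) : Dart U m → Dart U m
  | (τ, true) => (nx τ, false)
  | (τ, false) => (nx.symm τ, true)

/-- The shape of the cheap tours: they contain the matching `mate`, and all their other edges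
are spokes and links. -/
structure IsGadgetTour (nx : Equiv.Perm (Visit U m)) (σ : Equiv.Perm (Vertex U m)) : Prop where
  isTour : IsTour σ
  mate_mem : ∀ v, s(v, mate v) ∈ tourEdges σ
  mem_cases : ∀ e ∈ tourEdges σ, (∃ v, e = s(v, mate v)) ∨ (∃ d x, e = spoke d x) ∨
    ∃ τ x y, e = link nx τ x y

namespace IsGadgetTour

variable (h : IsGadgetTour nx σ)
include h

theorem existsUnique_neighbor (v : Vertex U m) :
    ∃! y, y ≠ mate v ∧ s(v, y) ∈ tourEdges σ :=
  have : Nonempty U := ⟨v.1.1.1⟩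
  h.isTour.existsUnique_neighbor_ne three_le_card_vertex (h.mate_mem v)

theorem eq_mate_or_spoke_or_link {d : Dart U m} {x : Bool} {v : Vertex U m}
    (hv : s((d, port x), v) ∈ tourEdges σ) :
    v = mate (d, port x) ∨ spoke d (!x) = s((d, port x), v) ∨ ∃ y, v = (opp nx d, port y) := by
  rcases h.mem_cases _ hv with ⟨v', hv'⟩ | ⟨d', x', hv'⟩ | ⟨τ, x', y', hv'⟩
  · rcases Sym2.eq_iff.1 hv' with ⟨rfl, rfl⟩ | ⟨hd, rfl⟩
    · exact .inl rfl
    · exact .inl (by rw [hd, mate_mate])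
  · have : d = d' ∧ x' = !x := by
      rcases Sym2.eq_iff.1 hv' with ⟨hd, -⟩ | ⟨hd, -⟩
      · simpa [eq_comm (a := x)] using hd
      · simp at hd
    grind
  · rcases Sym2.eq_iff.1 hv' with ⟨hd, rfl⟩ | ⟨hd, rfl⟩
    · simp only [Prod.mk.injEq] at hd
      exact .inr (.inr ⟨y', by rw [hd.1]; rfl⟩)
    · simp only [Prod.mk.injEq] at hd
      exact .inr (.inr ⟨x', by rw [hd.1]; simp [opp]⟩)

/-- Otherwise the four ports of `d` and of `opp nx d` would be closed under the tour. -/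
theorem exists_port_not_linked (d : Dart U m) :
    ∃ x, ∀ y, s((d, port x), (opp nx d, port y)) ∉ tourEdges σ := by
  by_contra! hlink
  choose y hy using hlink
  have hopp : opp nx d ≠ d := by
    rcases d with ⟨τ, _ | _⟩ <;> simp [opp]
  have hne (x : Bool) : ((opp nx d, port (y x)) : Vertex U m) ≠ mate (d, port x) := by
    simp [mate, hopp]
  have hne' (x : Bool) : ((d, port x) : Vertex U m) ≠ mate (opp nx d, port (y x)) := by
    simp [mate, hopp.symm]
  have hy' (x : Bool) : s((opp nx d, port (y x)), (d, port x)) ∈ tourEdges σ :=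
    Sym2.eq_swap ▸ hy x
  have hsurj : Function.Surjective y := Finite.surjective_of_injective fun x x' hx => by
    have := (h.existsUnique_neighbor (opp nx d, port (y x))).unique ⟨hne' x, hy' x⟩
      ⟨hx ▸ hne' x', hx ▸ hy' x'⟩
    simpa using this
  let S : Set (Vertex U m) := {v | v.2 ≠ hub ∧ (v.1 = d ∨ v.1 = opp nx d)}
  have hS : Set.MapsTo σ S S := by
    rintro ⟨d', _ | x⟩ ⟨hx, hd'⟩
    · exact absurd rfl hx
    have hσ : s((d', port x), σ (d', port x)) ∈ tourEdges σ := mem_tourEdges.2 (.inl rfl)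
    by_cases hm : σ (d', port x) = mate (d', port x)
    · simpa [S, hm, mate] using hd'
    rcases hd' with hd' | hd' <;> subst hd'
    · rw [(h.existsUnique_neighbor _).unique ⟨hm, hσ⟩ ⟨hne x, hy x⟩]
      simp [S]
    · obtain ⟨x, rfl⟩ := hsurj x
      rw [(h.existsUnique_neighbor _).unique ⟨hm, hσ⟩ ⟨hne' x, hy' x⟩]
      simp [S]
  have hhub : ((d, hub) : Vertex U m) ∈ S :=
    h.isTour.mem_of_mapsTo hS (x := (d, port false)) (by simp [S]) _
  exact hhub.1 rfl

theorem spoke_mem (d : Dart U m) : spoke d false ∈ tourEdges σ ∨ spoke d true ∈ tourEdges σ := by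
  obtain ⟨x, hx⟩ := h.exists_port_not_linked d
  obtain ⟨v, ⟨hv, hvE⟩, -⟩ := h.existsUnique_neighbor (d, port x)
  rcases h.eq_mate_or_spoke_or_link hvE with hv' | hv' | ⟨y, rfl⟩
  · exact absurd hv' hv
  · rw [← hv'] at hvE
    cases x
    · exact .inr hvE
    · exact .inl hvE
  · exact absurd hvE (hx y)

theorem spoke_rot_false_notMem {d : Dart U m} (hd : spoke d true ∈ tourEdges σ) :
    spoke (rot d) false ∉ tourEdges σ := by
  intro hd'
  have := (h.existsUnique_neighbor (rot d, hub)).unique (y₁ := (d, port false))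
    (y₂ := (rot d, port true)) ⟨by simp [mate], Sym2.eq_swap ▸ hd⟩
    ⟨by simp [mate], Sym2.eq_swap ▸ hd'⟩
  simp at this

theorem spoke_false_notMem {d d' : Dart U m} (hdd' : d.1.1 = d'.1.1)
    (hd : spoke d false ∉ tourEdges σ) : spoke d' false ∉ tourEdges σ :=
  mem_of_mapsTo_of_sameCycle (S := {d | spoke d false ∉ tourEdges σ}) (sameCycle_rot hdd')
    (fun d hd => h.spoke_rot_false_notMem ((h.spoke_mem d).resolve_left hd)) hd

theorem exists_forall_spoke_mem_iff :
    ∃ X : U → Bool, ∀ (d : Dart U m) (x : Bool), spoke d x ∈ tourEdges σ ↔ X d.1.1 = x := by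
  let X (u : U) : Bool := decide (spoke (((u, 0), false) : Dart U m) false ∉ tourEdges σ)
  have hX (d : Dart U m) : X d.1.1 = true ↔ spoke d false ∉ tourEdges σ :=
    decide_eq_true_iff.trans ⟨h.spoke_false_notMem rfl, h.spoke_false_notMem rfl⟩
  have hrot (d : Dart U m) : spoke d true ∈ tourEdges σ → X d.1.1 = true := fun hd =>
    (hX (rot d)).2 (h.spoke_rot_false_notMem hd)
  refine ⟨X, fun d x => ?_⟩
  have := hX d
  have := hrot d
  have := h.spoke_mem d
  cases x <;> grind

theorem exists_tourEdges_eq (hnx : ∀ τ τ', nx.SameCycle τ τ') :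
    ∃ X : U → Bool, tourEdges σ = tourEdges (assignTour nx X) := by
  obtain ⟨X, hX⟩ := h.exists_forall_spoke_mem_iff
  have hport {d d' : Dart U m} {x y : Bool} (hne : d' ≠ d)
      (hE : s((d, port x), (d', port y)) ∈ tourEdges σ) : X d.1.1 = x := by
    by_contra hx
    have hspoke : spoke d (!x) ∈ tourEdges σ := (hX d _).2 (Bool.eq_not.2 hx)
    rw [spoke, Bool.not_not] at hspoke
    have := (h.existsUnique_neighbor (d, port x)).unique ⟨by simp [mate, hne], hE⟩
      ⟨by simp [mate], hspoke⟩
    simp at this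
  have hU : Nonempty U := by
    obtain ⟨v, -⟩ := h.isTour.1
    exact ⟨v.1.1.1⟩
  refine ⟨X, eq_of_subset_of_card_le (fun e he => ?_) ?_⟩
  · rcases h.mem_cases e he with ⟨v, rfl⟩ | ⟨d, x, rfl⟩ | ⟨τ, x, y, rfl⟩
    · exact (mem_tourEdges_assignTour nx X).2 (.inl ⟨v, rfl⟩)
    · exact (spoke_mem_tourEdges_assignTour nx X).2 ((hX d x).1 he)
    · have he' : s(((nx τ, false), port y), ((τ, true), port x)) ∈ tourEdges σ :=
        Sym2.eq_swap ▸ he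
      exact (link_mem_tourEdges_assignTour nx X).2 ⟨hport (by simp) he, hport (by simp) he'⟩
  · rw [h.isTour.card_tourEdges three_le_card_vertex,
      (isTour_assignTour nx X hnx).card_tourEdges three_le_card_vertex]

end IsGadgetTour

end Edges

end Gadget

/-! ### The weights -/

section Weights

variable {U : Type*} [Fintype U] [DecidableEq U] {m : ℕ} (nx : Equiv.Perm (Visit U m))
  (cost : Visit U m → Bool → Bool → ℝ) (K L : ℝ) {B : ℝ} (X : U → Bool)

/-- The energy of an assignment: the cost of its values along the closed walk `nx`. -/
def walkEnergy : ℝ := ∑ τ, cost τ (X τ.1) (X (nx τ).1)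

/-- The weights of the instance: the matching is free, a spoke costs `K`, a link `K` plus the
cost of the two values which it encodes, and all other edges are forbidden by their weight `L`. -/
noncomputable def gadgetWeight (e : Sym2 (Vertex U m)) : ℝ :=
  open Classical in
  if ∃ v, e = s(v, mate v) then 0
  else if ∃ d x, e = spoke d x then K
  else Function.extend (fun t : Visit U m × Bool × Bool => link nx t.1 t.2.1 t.2.2)
    (fun t => K + cost t.1 t.2.1 t.2.2) (fun _ => L) e

variable {nx cost K L}

theorem gadgetWeight_mate (v : Vertex U m) : gadgetWeight nx cost K L s(v, mate v) = 0 :=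
  if_pos ⟨v, rfl⟩

theorem gadgetWeight_spoke (d : Dart U m) (x : Bool) :
    gadgetWeight nx cost K L (spoke d x) = K := by
  simp [gadgetWeight, spoke_ne_mate, spoke_inj]

theorem gadgetWeight_link (τ : Visit U m) (x y : Bool) :
    gadgetWeight nx cost K L (link nx τ x y) = K + cost τ x y := by
  have hinj : Function.Injective
      fun t : Visit U m × Bool × Bool => link nx t.1 t.2.1 t.2.2 := fun t t' h => by
    obtain ⟨h₁, h₂, h₃⟩ := (link_inj nx).1 h
    exact Prod.ext h₁ (Prod.ext h₂ h₃)
  simp only [gadgetWeight, link_ne_mate, link_ne_spoke, exists_false, if_false]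
  exact hinj.extend_apply _ _ (τ, x, y)

theorem gadgetWeight_cases (e : Sym2 (Vertex U m)) :
    (∃ v, e = s(v, mate v)) ∨ (∃ d x, e = spoke d x) ∨ (∃ τ x y, e = link nx τ x y) ∨
      gadgetWeight nx cost K L e = L := by
  by_contra! h
  obtain ⟨hmate, hspoke, hlink, hL⟩ := h
  refine hL ?_
  rw [gadgetWeight, if_neg (by simpa using hmate), if_neg (by simpa using hspoke),
    Function.extend_apply']
  rintro ⟨t, ht⟩
  exact hlink _ _ _ ht.symm

theorem tourWeight_assignTour [Nonempty U] (hnx : ∀ τ τ', nx.SameCycle τ τ') :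
    tourWeight (gadgetWeight nx cost K L) (assignTour nx X) =
      3 * Fintype.card (Visit U m) * K + walkEnergy nx cost X := by
  let w (e : Sym2 (Vertex U m)) : ℝ := gadgetWeight nx cost K L (Sym2.map (relabel X) e)
  have hmate (v : Vertex U m) : w s(v, mate v) = 0 := by
    rw [← gadgetWeight_mate (nx := nx) (cost := cost) (K := K) (L := L) (relabel X v),
      ← map_relabel_mate]
  have hspoke (d : Dart U m) : w s((d, port true), (d, hub)) = K := by
    simp only [w, map_relabel_spoke, gadgetWeight_spoke]
  have hlink (τ : Visit U m) : w s(((τ, true), port false), ((nx τ, false), port false)) =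
      K + cost τ (X τ.1) (X (nx τ).1) := by
    simp only [w, map_relabel_link, gadgetWeight_link]
  have hvisit (τ : Visit U m) : ∑ b, ∑ c, w s(((τ, b), c), falseTour nx ((τ, b), c)) =
      3 * K + cost τ (X τ.1) (X (nx τ).1) := by
    have huniv : (univ : Finset Kind) = {hub, port false, port true} := by decide
    calc _ = w s(((τ, true), hub), ((τ, true), port true)) +
              (w s(((τ, true), port false), ((nx τ, false), port false)) +
                w s(((τ, true), port true), mate ((τ, true), port true))) +
            (w s(((τ, false), hub), mate ((τ, false), hub)) +
              (w s(((τ, false), port false), mate ((τ, false), port false)) +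
                w s(((τ, false), port true), ((τ, false), hub)))) := by
          simp [huniv, falseTour, mate]
      _ = _ := by
          rw [hmate, hmate, hmate, hspoke, hlink, Sym2.eq_swap, hspoke]
          ring
  rw [(isTour_assignTour nx X hnx).tourWeight_eq_sum three_le_card_vertex,
    ← Equiv.sum_comp (relabel X)]
  simp only [assignTour, Equiv.permCongr_apply, Equiv.symm_apply_apply, ← Sym2.map_mk]
  rw [Fintype.sum_prod_type, Fintype.sum_prod_type]
  refine (sum_congr rfl fun τ _ => hvisit τ).trans ?_
  rw [sum_add_distrib, sum_const, card_univ, nsmul_eq_mul, walkEnergy]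
  ring

theorem gadgetWeight_nonneg (hB : ∀ τ x y, |cost τ x y| ≤ B) (hBK : B ≤ K) (hK : 0 ≤ K)
    (hL : 0 ≤ L) (e : Sym2 (Vertex U m)) : 0 ≤ gadgetWeight nx cost K L e := by
  rcases gadgetWeight_cases (nx := nx) (cost := cost) (K := K) (L := L) e with
    ⟨v, rfl⟩ | ⟨d, x, rfl⟩ | ⟨τ, x, y, rfl⟩ | h
  · exact gadgetWeight_mate v |>.ge
  · exact hK.trans_eq (gadgetWeight_spoke d x).symm
  · rw [gadgetWeight_link]
    linarith [neg_le_of_abs_le (hB τ x y)]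
  · exact hL.trans_eq h.symm

theorem sub_le_gadgetWeight (hB : ∀ τ x y, |cost τ x y| ≤ B) (hB₀ : 0 ≤ B) (hL : K - B ≤ L)
    {e : Sym2 (Vertex U m)} (he : ¬∃ v, e = s(v, mate v)) :
    K - B ≤ gadgetWeight nx cost K L e := by
  rcases gadgetWeight_cases (nx := nx) (cost := cost) (K := K) (L := L) e with
    hv | ⟨d, x, rfl⟩ | ⟨τ, x, y, rfl⟩ | h
  · exact absurd hv he
  · rw [gadgetWeight_spoke]
    linarith
  · rw [gadgetWeight_link]
    linarith [neg_le_of_abs_le (hB τ x y)]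
  · rw [h]
    exact hL

theorem card_image_mate_le :
    #(univ.image fun v : Vertex U m => s(v, mate v)) ≤ 3 * Fintype.card (Visit U m) := by
  have hsub : (univ.image fun v : Vertex U m => s(v, mate v)) ⊆
      (univ.image fun d : Dart U m => s((d, port false), (d, port true))) ∪
        univ.image fun τ : Visit U m => s(((τ, false), hub), ((τ, true), hub)) := by
    intro e he
    obtain ⟨⟨⟨τ, b⟩, c⟩, -, rfl⟩ := mem_image.1 he
    rw [mem_union, mem_image, mem_image]
    rcases c with _ | _ | _
    · refine .inr ⟨τ, mem_univ _, ?_⟩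
      cases b
      · rfl
      · exact Sym2.eq_swap
    · exact .inl ⟨_, mem_univ _, rfl⟩
    · exact .inl ⟨_, mem_univ _, Sym2.eq_swap⟩
  refine (card_le_card hsub).trans ((card_union_le _ _).trans
    ((add_le_add card_image_le card_image_le).trans_eq ?_))
  rw [card_univ, card_univ, Fintype.card_prod (Visit U m), Fintype.card_bool]
  ring

theorem card_sdiff_image_mate_le [Nonempty U] {σ : Equiv.Perm (Vertex U m)}
    (hB : ∀ τ x y, |cost τ x y| ≤ B) (hB₀ : 0 ≤ B)
    (hK : (3 * Fintype.card (Visit U m) + 2) * B < K) (hL : K ≤ L)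
    (hw : tourWeight (gadgetWeight nx cost K L) σ ≤ 3 * Fintype.card (Visit U m) * K + B) :
    #(tourEdges σ \ univ.image fun v => s(v, mate v)) ≤ 3 * Fintype.card (Visit U m) := by
  set p := Fintype.card (Visit U m)
  set M := univ.image fun v : Vertex U m => s(v, mate v) with hM
  have : (1 : ℝ) ≤ p := by exact_mod_cast Fintype.card_pos (α := Visit U m)
  have hBK : B ≤ K := by nlinarith
  have hmul : #(tourEdges σ \ M) * (K - B) ≤ 3 * p * K + B := calc
    _ ≤ ∑ e ∈ tourEdges σ \ M, gadgetWeight nx cost K L e := by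
      rw [← nsmul_eq_mul]
      exact card_nsmul_le_sum _ _ _ fun e he => sub_le_gadgetWeight hB hB₀ (by linarith)
        (by simpa [hM, eq_comm] using (mem_sdiff.1 he).2)
    _ ≤ tourWeight (gadgetWeight nx cost K L) σ :=
      sum_le_sum_of_subset_of_nonneg sdiff_subset fun e _ _ =>
        gadgetWeight_nonneg hB hBK (by linarith) (by linarith) e
    _ ≤ _ := hw
  by_contra! hlt
  have : (3 * p + 1 : ℝ) ≤ #(tourEdges σ \ M) := by exact_mod_cast hlt
  nlinarith

theorem isGadgetTour_of_tourWeight_le {σ : Equiv.Perm (Vertex U m)} (hσ : IsTour σ)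
    (hB : ∀ τ x y, |cost τ x y| ≤ B) (hB₀ : 0 ≤ B)
    (hK : (3 * Fintype.card (Visit U m) + 2) * B < K)
    (hL : 3 * Fintype.card (Visit U m) * K + B < L)
    (hw : tourWeight (gadgetWeight nx cost K L) σ ≤ 3 * Fintype.card (Visit U m) * K + B) :
    IsGadgetTour nx σ := by
  obtain ⟨v₀, -⟩ := hσ.1
  have : Nonempty U := ⟨v₀.1.1.1⟩
  have hp : (1 : ℝ) ≤ Fintype.card (Visit U m) := by
    exact_mod_cast Fintype.card_pos (α := Visit U m)
  have hBK : B ≤ K := by nlinarith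
  have hKL : K ≤ L := by nlinarith
  have hsub : (univ.image fun v => s(v, mate v)) ⊆ tourEdges σ := by
    have h₁ := hσ.card_tourEdges three_le_card_vertex
    have h₂ := card_sdiff_add_card_inter (tourEdges σ) (univ.image fun v => s(v, mate v))
    have h₃ := card_sdiff_image_mate_le hB hB₀ hK hKL hw
    have h₄ := card_image_mate_le (U := U) (m := m)
    rw [card_vertex] at h₁
    exact inter_eq_right.1 (eq_of_subset_of_card_le inter_subset_right (by lia))
  refine ⟨hσ, fun v => hsub (mem_image_of_mem _ (mem_univ v)), fun e he => ?_⟩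
  have hne : gadgetWeight nx cost K L e ≠ L := by
    refine ne_of_lt (lt_of_le_of_lt ?_ (hw.trans_lt hL))
    exact single_le_sum (f := gadgetWeight nx cost K L)
      (fun e _ => gadgetWeight_nonneg hB hBK (by linarith) (by linarith) e) he
  exact (gadgetWeight_cases e).imp_right (Or.imp_right fun h => h.resolve_right hne)

end Weights

section Reduction

variable {U : Type*} [Fintype U] [DecidableEq U] {m k : ℕ} {nx : Equiv.Perm (Visit U m)}

/-- The neighbours of an assignment in the local search which changes a single variable. -/
def flipAt (X : U → Bool) (u : U) : U → Bool := Function.update X u !X u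

theorem hammingDist_flipAt (X : U → Bool) (u : U) : hammingDist X (flipAt X u) = 1 := by
  refine card_eq_one.2 ⟨u, Finset.ext fun u' => ?_⟩
  rw [mem_filter, mem_singleton]
  by_cases h : u' = u
  · subst h
    simp [flipAt]
  · simp [flipAt, h]

theorem exists_eq_flipAt_of_hammingDist_eq_one {X X' : U → Bool} (h : hammingDist X X' = 1) :
    ∃ u, X' = flipAt X u := by
  obtain ⟨u, hu⟩ := card_eq_one.1 h
  refine ⟨u, funext fun u' => ?_⟩
  have : X u' ≠ X' u' ↔ u' = u := by simpa using Finset.ext_iff.1 hu u'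
  by_cases h : u' = u
  · subst h
    rw [flipAt, Function.update_self, Bool.eq_not]
    exact (this.2 rfl).symm
  · rw [flipAt, Function.update_of_ne h]
    exact (not_not.1 (mt this.1 h)).symm

section

variable [Nonempty U] {cost : Visit U m → Bool → Bool → ℝ} {B K L : ℝ} {X : U → Bool}
  {σ σ' : Equiv.Perm (Vertex U m)} (hnx : ∀ τ τ', nx.SameCycle τ τ')
include hnx

theorem tourWeight_eq_of_tourEdges_eq (h : tourEdges σ = tourEdges (assignTour nx X)) :
    tourWeight (gadgetWeight nx cost K L) σ =
      3 * Fintype.card (Visit U m) * K + walkEnergy nx cost X := by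
  rw [← tourWeight_assignTour X hnx, tourWeight, tourWeight, h]

theorem improvingKSwap_gadgetWeight_iff (hk : 4 * (m + 1) ≤ k) (hk' : k < 6 * (m + 1))
    (hB : ∀ τ x y, |cost τ x y| ≤ B) (hB₀ : 0 ≤ B)
    (hK : (3 * Fintype.card (Visit U m) + 2) * B < K)
    (hL : 3 * Fintype.card (Visit U m) * K + B < L) (hX : walkEnergy nx cost X ≤ B)
    (hσ : tourEdges σ = tourEdges (assignTour nx X)) :
    ImprovingKSwap (gadgetWeight nx cost K L) k σ σ' ↔ IsTour σ' ∧ ∃ u,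
      tourEdges σ' = tourEdges (assignTour nx (flipAt X u)) ∧
        walkEnergy nx cost (flipAt X u) < walkEnergy nx cost X := by
  rw [ImprovingKSwap, IsKSwap, and_assoc, tourWeight_eq_of_tourEdges_eq hnx hσ, hσ]
  refine and_congr_right fun hσ' => ⟨fun ⟨hcard, hlt⟩ => ?_, fun ⟨u, hu, hlt⟩ => ⟨?_, ?_⟩⟩
  · obtain ⟨X', hX'⟩ := (isGadgetTour_of_tourWeight_le hσ' hB hB₀ hK hL
      (by linarith)).exists_tourEdges_eq hnx
    rw [tourWeight_eq_of_tourEdges_eq hnx hX', add_lt_add_iff_left] at hlt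
    have hle : hammingDist X X' ≤ 1 := by
      have := (le_card_sdiff_assignTour nx X X').trans (hX' ▸ hcard)
      by_contra! h
      nlinarith
    have hne : hammingDist X X' ≠ 0 := by
      rw [hammingDist_ne_zero]
      rintro rfl
      exact hlt.false
    obtain ⟨u, rfl⟩ := exists_eq_flipAt_of_hammingDist_eq_one (X := X) (X' := X') (by lia)
    exact ⟨u, hX', hlt⟩
  · rw [hu]
    refine (card_sdiff_assignTour_le nx X (flipAt X u)).trans ?_
    rwa [hammingDist_flipAt, one_mul]
  · rwa [tourWeight_eq_of_tourEdges_eq hnx hu, add_lt_add_iff_left]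

end

variable [Nonempty U] (hnx : ∀ τ τ', nx.SameCycle τ τ') (hk : 4 * (m + 1) ≤ k)
  (hk' : k < 6 * (m + 1)) (cost : Visit U m → Bool → Bool → ℝ)
include hnx hk hk'

theorem exists_weight_improvingKSwap_iff :
    ∃ w : Sym2 (Vertex U m) → ℝ, (∀ e, 0 ≤ w e) ∧ ∀ X σ σ',
      tourEdges σ = tourEdges (assignTour nx X) →
        (ImprovingKSwap w k σ σ' ↔ IsTour σ' ∧ ∃ u,
          tourEdges σ' = tourEdges (assignTour nx (flipAt X u)) ∧
            walkEnergy nx cost (flipAt X u) < walkEnergy nx cost X) := by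
  set B := ∑ τ, ∑ x, ∑ y, |cost τ x y|
  set K := (3 * Fintype.card (Visit U m) + 2) * B + 1
  have hB₀ : 0 ≤ B := by positivity
  have hcost (τ x y) : |cost τ x y| ≤ ∑ x, ∑ y, |cost τ x y| :=
    (single_le_sum (f := fun y => |cost τ x y|) (by intros; positivity) (mem_univ y)).trans
      (single_le_sum (f := fun x => ∑ y, |cost τ x y|) (by intros; positivity) (mem_univ x))
  have hB (τ x y) : |cost τ x y| ≤ B := (hcost τ x y).trans
    (single_le_sum (f := fun τ => ∑ x, ∑ y, |cost τ x y|) (by intros; positivity) (mem_univ τ))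
  have hX (X : U → Bool) : walkEnergy nx cost X ≤ B :=
    sum_le_sum fun τ _ => (le_abs_self _).trans (hcost τ _ _)
  have hK : (3 * Fintype.card (Visit U m) + 2) * B < K := lt_add_one _
  have hBK : B ≤ K := by
    have : 0 ≤ Fintype.card (Visit U m) * B := by positivity
    linarith
  refine ⟨gadgetWeight nx cost K (3 * Fintype.card (Visit U m) * K + B + 1),
    gadgetWeight_nonneg hB hBK (by positivity) (by positivity), fun X σ σ' hσ => ?_⟩
  exact improvingKSwap_gadgetWeight_iff hnx hk hk' hB hB₀ hK (lt_add_one _) (hX X) hσ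

theorem exists_forall_maximalImprovingSwapSeq_le_length {rank : (U → Bool) → ℕ → Prop}
    (hstep : ∀ X u n, rank X n → walkEnergy nx cost (flipAt X u) < walkEnergy nx cost X →
      ∃ n', rank (flipAt X u) n' ∧ n ≤ n' + 1)
    (hopt : ∀ X n, rank X n →
      (∀ u, walkEnergy nx cost X ≤ walkEnergy nx cost (flipAt X u)) → n = 0)
    {X₀ : U → Bool} {n₀ : ℕ} (hrank : rank X₀ n₀) :
    ∃ (w : Sym2 (Vertex U m) → ℝ) (τ₀ : Equiv.Perm (Vertex U m)), (∀ e, 0 ≤ w e) ∧ IsTour τ₀ ∧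
      ∀ l, MaximalImprovingSwapSeq w k τ₀ l → n₀ ≤ l.length := by
  obtain ⟨w, hw₀, hw⟩ := exists_weight_improvingKSwap_iff hnx hk hk' cost
  refine ⟨w, assignTour nx X₀, hw₀, isTour_assignTour nx X₀ hnx, fun l hl => hl.le_length
    (rank := fun σ n => ∃ X, tourEdges σ = tourEdges (assignTour nx X) ∧ rank X n)
    ?_ ?_ ⟨X₀, rfl, hrank⟩⟩
  · rintro σ τ n ⟨X, hσ, hn⟩ hστ
    obtain ⟨-, u, hτ, hu⟩ := (hw X σ τ hσ).1 hστ
    obtain ⟨n', hn', hle⟩ := hstep X u n hn hu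
    exact ⟨n', ⟨flipAt X u, hτ, hn'⟩, hle⟩
  · rintro σ n ⟨X, hσ, hn⟩ hloc
    refine hopt X n hn fun u => not_lt.1 fun hu => hloc (assignTour nx (flipAt X u)) ?_
    exact (hw X σ _ hσ).2 ⟨isTour_assignTour nx _ hnx, u, rfl, hu⟩

end Reduction

theorem exists_fin_forall_maximalImprovingSwapSeq_le_length {n k n₀ : ℕ}
    (hn : Fintype.card V = n)
    (h : ∃ (w : Sym2 V → ℝ) (τ₀ : Equiv.Perm V), (∀ e, 0 ≤ w e) ∧ IsTour τ₀ ∧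
      ∀ l, MaximalImprovingSwapSeq w k τ₀ l → n₀ ≤ l.length) :
    ∃ (w : Sym2 (Fin n) → ℝ) (τ₀ : Equiv.Perm (Fin n)), (∀ e, 0 ≤ w e) ∧ IsTour τ₀ ∧
      ∀ l, MaximalImprovingSwapSeq w k τ₀ l → n₀ ≤ l.length := by
  obtain ⟨w, τ₀, hw, hτ₀, hl⟩ := h
  let e := Fintype.equivFinOfCardEq hn
  refine ⟨w ∘ Sym2.map e.symm, e.permCongr τ₀, fun _ => hw _, (isTour_permCongr e τ₀).2 hτ₀,
    fun l hmax => ?_⟩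
  obtain ⟨l, rfl⟩ := List.map_surjective_iff.2 e.permCongr.surjective l
  rw [List.length_map]
  exact hl l ((maximalImprovingSwapSeq_permCongr e w k τ₀ l).1 hmax)

/-! ### The closed walk of the counter -/

/-- The variables of one level of the counter. Its state is driven through `r`, the request of the
level above, and reported back through `a`, the acknowledgement. -/
inductive Var
  | r | p | q | s | t | a
  deriving DecidableEq, Inhabited

instance : Fintype Var := ⟨{.r, .p, .q, .s, .t, .a}, fun v => by cases v <;> decide⟩

/-- The variables of a counter with `n + 2` levels, the top one being level `0`. -/
abbrev Node (n : ℕ) := Fin (n + 2) × Var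

section Walk

variable {n d : ℕ}

/-- Selection by the number of a visit: first, second, last, or any other. -/
def atRound {α : Sort*} (l : Fin (d + 3)) (first second last other : α) : α :=
  if l = 0 then first else if l = 1 then second else if l = Fin.last _ then last else other

section

variable {α : Sort*} (w x y z : α)

theorem atRound_zero : atRound (0 : Fin (d + 3)) w x y z = w := if_pos rfl

theorem atRound_one : atRound (1 : Fin (d + 3)) w x y z = x := by simp [atRound]

theorem atRound_last : atRound (Fin.last (d + 2)) w x y z = y := by
  have : Fin.last (d + 2) ≠ 1 := by simp [Fin.ext_iff]
  simp [atRound, this]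

theorem atRound_of_ne {l : Fin (d + 3)} (h₀ : l ≠ 0) (h₁ : l ≠ 1) (h₂ : l ≠ Fin.last _) :
    atRound l w x y z = z := by
  simp [atRound, h₀, h₁, h₂]

end

/-- The step of the walk. In each level it moves between all pairs of variables, of this level or
of this one and an adjacent one, whose product occurs in the energy. -/
def nextVisit : Visit (Node n) (d + 2) → Visit (Node n) (d + 2)
  | ((i, .r), l) => atRound l ((i, .t), 0) ((i + 1, .r), 2) ((i - 1, .q), 1) ((i, .r), l + 1)
  | ((i, .p), l) => atRound l ((i, .r), 1) ((i, .t), 1) ((i + 1, .a), 2) ((i, .p), l + 1)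
  | ((i, .q), l) => atRound l ((i, .p), 0) ((i, .s), 0) ((i, .p), 2) ((i, .q), l + 1)
  | ((i, .s), l) => atRound l ((i, .p), 1) ((i, .s), 2) ((i + 1, .r), 0) ((i, .s), l + 1)
  | ((i, .t), l) => atRound l ((i, .q), 0) ((i, .a), 0) ((i, .q), 2) ((i, .t), l + 1)
  | ((i, .a), l) => atRound l ((i + 1, .a), 1) ((i - 1, .t), 2) ((i - 1, .s), 1) ((i, .a), l + 1)

theorem eq_zero_or_eq_one_or_two_le (l : Fin (d + 3)) : l = 0 ∨ l = 1 ∨ 2 ≤ l := by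
  simp only [Fin.ext_iff, Fin.le_def, Fin.val_zero, Fin.val_one, Fin.val_two]
  lia

theorem ne_zero_and_ne_one_of_two_le {l : Fin (d + 3)} (hl : 2 ≤ l) : l ≠ 0 ∧ l ≠ 1 := by
  simp only [ne_eq, Fin.ext_iff, Fin.le_def, Fin.val_zero, Fin.val_one, Fin.val_two] at hl ⊢
  lia

theorem eq_two_or_exists_eq_add_one {l : Fin (d + 3)} (hl : 2 ≤ l) :
    l = 2 ∨ ∃ l', l = l' + 1 ∧ 2 ≤ l' ∧ l' ≠ Fin.last _ := by
  cases l using Fin.cases with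
  | zero => exact absurd rfl (ne_zero_and_ne_one_of_two_le hl).1
  | succ l =>
    refine or_iff_not_imp_left.2 fun h => ⟨l.castSucc, Fin.coeSucc_eq_succ.symm, ?_, by simp⟩
    simp only [Fin.ext_iff, Fin.le_def, Fin.val_succ, Fin.val_castSucc, Fin.val_two] at h hl ⊢
    lia

theorem nextVisit_of_two_le {l : Fin (d + 3)} (hl : 2 ≤ l) (h : l ≠ Fin.last _) (u : Node n) :
    nextVisit (u, l) = (u, l + 1) := by
  obtain ⟨h₀, h₁⟩ := ne_zero_and_ne_one_of_two_le hl
  rcases u with ⟨i, _ | _⟩ <;> exact atRound_of_ne _ _ _ _ h₀ h₁ h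

theorem surjective_nextVisit :
    Function.Surjective (nextVisit : Visit (Node n) (d + 2) → Visit (Node n) (d + 2)) := by
  rintro ⟨⟨i, v⟩, l⟩
  obtain rfl | rfl | hl := eq_zero_or_eq_one_or_two_le l
  · cases v
    · exact ⟨((i - 1, .s), Fin.last _), by simp [nextVisit, atRound_last]⟩
    · exact ⟨((i, .q), 0), rfl⟩
    · exact ⟨((i, .t), 0), rfl⟩
    · exact ⟨((i, .q), 1), atRound_one _ _ _ _⟩
    · exact ⟨((i, .r), 0), rfl⟩
    · exact ⟨((i, .t), 1), atRound_one _ _ _ _⟩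
  · cases v
    · exact ⟨((i, .p), 0), rfl⟩
    · exact ⟨((i, .s), 0), rfl⟩
    · exact ⟨((i + 1, .r), Fin.last _), by simp [nextVisit, atRound_last]⟩
    · exact ⟨((i + 1, .a), Fin.last _), by simp [nextVisit, atRound_last]⟩
    · exact ⟨((i, .p), 1), atRound_one _ _ _ _⟩
    · exact ⟨((i - 1, .a), 0), by simp [nextVisit, atRound_zero]⟩
  obtain rfl | ⟨l, rfl, hl, h⟩ := eq_two_or_exists_eq_add_one hl
  · cases v
    · exact ⟨((i - 1, .r), 1), by simp [nextVisit, atRound_one]⟩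
    · exact ⟨((i, .q), Fin.last _), atRound_last _ _ _ _⟩
    · exact ⟨((i, .t), Fin.last _), atRound_last _ _ _ _⟩
    · exact ⟨((i, .s), 1), atRound_one _ _ _ _⟩
    · exact ⟨((i + 1, .a), 1), by simp [nextVisit, atRound_one]⟩
    · exact ⟨((i - 1, .p), Fin.last _), by simp [nextVisit, atRound_last]⟩
  · exact ⟨((i, v), l), nextVisit_of_two_le hl h _⟩

/-- The closed walk of the counter, which visits every variable `d + 3` times. -/
noncomputable def counterWalk : Equiv.Perm (Visit (Node n) (d + 2)) :=
  Equiv.ofBijective nextVisit (Finite.injective_iff_bijective.1 <|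
    Finite.injective_iff_surjective.2 surjective_nextVisit)

section

variable {S : Set (Visit (Node n) (d + 2))} (hS : Set.MapsTo nextVisit S S)
include hS

theorem mem_of_mem_two {u : Node n} (hu : (u, 2) ∈ S) {l : Fin (d + 3)} (hl : 2 ≤ l) :
    (u, l) ∈ S := by
  induction l using Fin.induction with
  | zero => exact absurd rfl (ne_zero_and_ne_one_of_two_le hl).1
  | succ l ih =>
    obtain h | ⟨l', hl', h, hne⟩ := eq_two_or_exists_eq_add_one hl
    · rwa [h]
    · rw [← Fin.coeSucc_eq_succ, add_left_inj] at hl'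
      subst hl'
      rw [← Fin.coeSucc_eq_succ, ← nextVisit_of_two_le h hne]
      exact hS (ih h)

/-- Between visit `0` of `r` in level `i` and the same visit in level `i + 1`, the walk passes the
later visits of `r` and `a` in level `i + 1` and all other visits in level `i`. -/
theorem mem_of_mem_zero {i : Fin (n + 2)} (h : ((i, .r), 0) ∈ S) : ((i + 1, .r), 0) ∈ S ∧
    ∀ v l, ((if v = .r ∧ 2 ≤ l ∨ v = .a ∧ 1 ≤ l then i + 1 else i, v), l) ∈ S := by
  have step {τ₁ τ₂} (h : τ₁ ∈ S) (h' : nextVisit τ₁ = τ₂) : τ₂ ∈ S := h' ▸ hS h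
  have late {u : Node n} (h : (u, 2) ∈ S) := fun l => mem_of_mem_two hS h (l := l)
  have hlast : 2 ≤ Fin.last (d + 2) := Fin.le_last _
  have t₀ := step h (τ₂ := ((i, .t), 0)) rfl
  have q₀ := step t₀ (τ₂ := ((i, .q), 0)) rfl
  have p₀ := step q₀ (τ₂ := ((i, .p), 0)) rfl
  have r₁ := step p₀ (τ₂ := ((i, .r), 1)) rfl
  have r₂ := late (step r₁ (τ₂ := ((i + 1, .r), 2)) (atRound_one _ _ _ _))
  have q₁ := step (r₂ _ hlast) (τ₂ := ((i, .q), 1)) (by simp [nextVisit, atRound_last])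
  have s₀ := step q₁ (τ₂ := ((i, .s), 0)) (atRound_one _ _ _ _)
  have p₁ := step s₀ (τ₂ := ((i, .p), 1)) rfl
  have t₁ := step p₁ (τ₂ := ((i, .t), 1)) (atRound_one _ _ _ _)
  have a₀ := step t₁ (τ₂ := ((i, .a), 0)) (atRound_one _ _ _ _)
  have a₁ := step a₀ (τ₂ := ((i + 1, .a), 1)) rfl
  have t₂ := late (step a₁ (τ₂ := ((i, .t), 2)) (by simp [nextVisit, atRound_one]))
  have q₂ := late (step (t₂ _ hlast) (τ₂ := ((i, .q), 2)) (atRound_last _ _ _ _))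
  have p₂ := late (step (q₂ _ hlast) (τ₂ := ((i, .p), 2)) (atRound_last _ _ _ _))
  have a₂ := late (step (p₂ _ hlast) (τ₂ := ((i + 1, .a), 2)) (atRound_last _ _ _ _))
  have s₁ := step (a₂ _ hlast) (τ₂ := ((i, .s), 1)) (by simp [nextVisit, atRound_last])
  have s₂ := late (step s₁ (τ₂ := ((i, .s), 2)) (atRound_one _ _ _ _))
  refine ⟨step (s₂ _ hlast) (atRound_last _ _ _ _), fun v l => ?_⟩
  obtain rfl | rfl | hl := eq_zero_or_eq_one_or_two_le l
  · cases v <;> simpa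
  · cases v <;> simpa
  · have hl' : 1 ≤ l := Fin.one_le_of_ne_zero (ne_zero_and_ne_one_of_two_le hl).1
    cases v <;> simp [*]

theorem mem_of_mapsTo_nextVisit (h : ((0, .r), 0) ∈ S) (τ : Visit (Node n) (d + 2)) : τ ∈ S := by
  have start (i : Fin (n + 2)) : ((i, .r), 0) ∈ S := by
    induction i using Fin.induction with
    | zero => exact h
    | succ i ih => simpa using (mem_of_mem_zero hS ih).1
  obtain ⟨⟨i, v⟩, l⟩ := τ
  by_cases hv : v = .r ∧ 2 ≤ l ∨ v = .a ∧ 1 ≤ l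
  · simpa [hv] using (mem_of_mem_zero hS (start (i - 1))).2 v l
  · simpa [hv] using (mem_of_mem_zero hS (start i)).2 v l

end

theorem sameCycle_counterWalk (τ τ' : Visit (Node n) (d + 2)) : counterWalk.SameCycle τ τ' := by
  have H := mem_of_mapsTo_nextVisit (n := n) (d := d)
    (S := {τ | counterWalk.SameCycle ((0, .r), 0) τ})
    (fun τ hτ => Equiv.Perm.sameCycle_apply_right.2 hτ) .rfl
  exact (H τ).symm.trans (H τ')

end Walk

/-! ### The energy of the counter -/

/-- Coefficients of the energy of one level: a linear coefficient for each variable, a quadratic one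
for each pair of variables that is used and, with a prime on the variable of the level below, for
each pair of variables of adjacent levels that is used. -/
structure Coeffs where
  (r p q s t a : ℤ)
  (rp rt pq ps pt qs qt ta : ℤ)
  (rr' qr' sr' pa' ta' aa' : ℤ)

/-- The energy of a level in state `A`, coupled to values `r'` and `a'` of `r` and `a` in the level
below. -/
def levelEnergy (w : Coeffs) (A : Var → Bool) (r' a' : Bool) : ℤ :=
  let x (v : Var) := (A v).toInt
  w.r * x .r + w.p * x .p + w.q * x .q + w.s * x .s + w.t * x .t + w.a * x .a +
  w.rp * (x .r * x .p) + w.rt * (x .r * x .t) + w.pq * (x .p * x .q) + w.ps * (x .p * x .s) +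
  w.pt * (x .p * x .t) + w.qs * (x .q * x .s) + w.qt * (x .q * x .t) + w.ta * (x .t * x .a) +
  (w.rr' * x .r + w.qr' * x .q + w.sr' * x .s) * r'.toInt +
  (w.pa' * x .p + w.ta' * x .t + w.aa' * x .a) * a'.toInt

section Energy

variable {n d : ℕ} (co : Fin (n + 2) → Coeffs) (X : Node n → Bool)

/-- The cost of one step of the walk, as a function of the values at its ends. Every monomial of the
energy is charged to a single step between its variables. -/
def stepCost : Visit (Node n) (d + 2) → Bool → Bool → ℤ
  | ((i, .r), l) => atRound l
      (fun x y => (co i).r * x.toInt + (co i).rt * (x.toInt * y.toInt))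
      (fun x y => (co i).rr' * (x.toInt * y.toInt))
      (fun x y => (co (i - 1)).qr' * (y.toInt * x.toInt)) (fun _ _ => 0)
  | ((i, .p), l) => atRound l
      (fun x y => (co i).p * x.toInt + (co i).rp * (y.toInt * x.toInt))
      (fun x y => (co i).pt * (x.toInt * y.toInt))
      (fun x y => (co i).pa' * (x.toInt * y.toInt)) (fun _ _ => 0)
  | ((i, .q), l) => atRound l
      (fun x y => (co i).q * x.toInt + (co i).pq * (y.toInt * x.toInt))
      (fun x y => (co i).qs * (x.toInt * y.toInt)) (fun _ _ => 0) (fun _ _ => 0)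
  | ((i, .s), l) => atRound l
      (fun x y => (co i).s * x.toInt + (co i).ps * (y.toInt * x.toInt)) (fun _ _ => 0)
      (fun x y => (co i).sr' * (x.toInt * y.toInt)) (fun _ _ => 0)
  | ((i, .t), l) => atRound l
      (fun x y => (co i).t * x.toInt + (co i).qt * (y.toInt * x.toInt))
      (fun x y => (co i).ta * (x.toInt * y.toInt)) (fun _ _ => 0) (fun _ _ => 0)
  | ((i, .a), l) => atRound l
      (fun x y => (co i).a * x.toInt + (co i).aa' * (x.toInt * y.toInt))
      (fun x y => (co (i - 1)).ta' * (y.toInt * x.toInt)) (fun _ _ => 0) (fun _ _ => 0)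

/-- The energy of an assignment. The level below the last one is level `0`. -/
def energy : ℤ := ∑ i, levelEnergy (co i) (fun v => X (i, v)) (X (i + 1, .r)) (X (i + 1, .a))

theorem Var.sum_univ (f : Var → ℤ) : ∑ v, f v = f .r + f .p + f .q + f .s + f .t + f .a := by
  change f .r + (f .p + (f .q + (f .s + (f .t + (f .a + 0))))) = _
  ring

theorem sum_sub_one (f : Fin (n + 2) → Fin (n + 2) → ℤ) : ∑ i, f i (i - 1) = ∑ i, f (i + 1) i := by
  simpa using Equiv.sum_comp (Equiv.subRight (1 : Fin (n + 2))) fun i => f (i + 1) i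

theorem sum_atRound {α β γ : Type*} (X : γ → β) (f g h : α → β → ℤ) (a : α)
    (x y z : γ × Fin (d + 3)) (w : Fin (d + 3) → γ × Fin (d + 3)) :
    ∑ l, atRound l f g h (fun _ _ => 0) a (X (atRound l x y z (w l)).1) =
      f a (X x.1) + g a (X y.1) + h a (X z.1) := by
  rw [Fin.sum_univ_succ, Fin.sum_univ_succ, Fin.sum_univ_castSucc, sum_eq_zero]
  · simp [atRound, add_assoc, Fin.ext_iff]
  · intro l _
    rw [atRound_of_ne] <;> simp [Fin.ext_iff]
    lia

theorem walkEnergy_stepCost :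
    walkEnergy (counterWalk (d := d)) (fun τ x y => (stepCost co τ x y : ℝ)) X = energy co X := by
  have hstep : ∑ τ : Visit (Node n) (d + 2), stepCost co τ (X τ.1) (X (nextVisit τ).1) =
      energy co X := by
    simp only [Fintype.sum_prod_type, Var.sum_univ, stepCost, nextVisit, sum_atRound,
      sum_add_distrib, sum_sub_one fun i j => (co j).qr' * ((X (j, .q)).toInt * (X (i, .r)).toInt),
      sum_sub_one fun i j => (co j).ta' * ((X (j, .t)).toInt * (X (i, .a)).toInt)]
    simp only [energy, levelEnergy, ← sum_add_distrib]
    exact sum_congr rfl fun i _ => by ring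
  rw [← hstep, walkEnergy]
  push_cast
  rfl

theorem flipAt_level_self (i : Fin (n + 2)) (c : Var) :
    (fun v => flipAt X (i, c) (i, v)) = flipAt (fun v => X (i, v)) c := by
  ext v
  simp [flipAt, Function.update_apply]

theorem flipAt_level_of_ne {i j : Fin (n + 2)} (h : j ≠ i) (c v : Var) :
    flipAt X (i, c) (j, v) = X (j, v) :=
  Function.update_of_ne (by simp [h]) _ _

theorem energy_flipAt_sub (i : Fin (n + 2)) (c : Var) {A A' : Var → Bool}
    (hA : (fun v => X (i, v)) = A) (hA' : flipAt A c = A') :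
    energy co (flipAt X (i, c)) - energy co X =
      levelEnergy (co i) A' (X (i + 1, .r)) (X (i + 1, .a)) -
        levelEnergy (co i) A (X (i + 1, .r)) (X (i + 1, .a)) +
      (levelEnergy (co (i - 1)) (fun v => X (i - 1, v)) (A' .r) (A' .a) -
        levelEnergy (co (i - 1)) (fun v => X (i - 1, v)) (A .r) (A .a)) := by
  subst hA hA'
  have hval (v : Var) : flipAt X (i, c) (i, v) = flipAt (fun v => X (i, v)) c v :=
    congrFun (flipAt_level_self X i c) v
  rw [energy, energy, ← sum_sub_distrib, Fintype.sum_eq_add i (i - 1) (by simp [eq_sub_iff_add_eq])]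
  · simp [flipAt_level_of_ne, hval]
  · rintro j ⟨h, h'⟩
    simp [flipAt_level_of_ne, h, eq_sub_iff_add_eq.not.1 h']

end Energy

/-! ### The cycle of a level -/

/-- The coefficients of an inner level at scale `g`. They are chosen so that in each phase of the
level no flip improves the energy other than those which lead to the next phase. -/
def midCoeffs (g : ℤ) : Coeffs where
  r := 40 * g - 12
  p := g + 1
  q := 4
  s := 20 * g - 9
  t := 20 * g + 3
  a := 3
  rp := -g
  rt := 2 - 20 * g
  pq := 6 - 20 * g
  ps := 20 * g
  pt := 20 * g - 6
  qs := 8 - 20 * g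
  qt := -20 * g
  ta := -3
  rr' := 11 - 20 * g
  qr' := 20 * g - 11
  sr' := 10 - 20 * g
  pa' := -2
  ta' := 1
  aa' := -2

/-- The coefficients of the last level, which has no level below to drive. -/
def bottomCoeffs : Coeffs where
  r := 8
  p := 0
  q := 0
  s := 0
  t := 6
  a := 3
  rp := 0
  rt := -7
  pq := 0
  ps := 0
  pt := 0
  qs := 0
  qt := 0
  ta := -5
  rr' := 0
  qr' := 0
  sr' := 0
  pa' := 0
  ta' := 0
  aa' := 0

/-- The states a level passes through in one cycle. Equal states in different phases differ in what
the level expects of the level below. -/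
def phase (k : Fin 20) : Var → Bool
  | .r => 1 ≤ k && k ≤ 13
  | .p => 4 ≤ k && k ≤ 8
  | .q => 5 ≤ k && k ≤ 15
  | .s => 10 ≤ k && k ≤ 16
  | .t => 8 ≤ k && k ≤ 14
  | .a => 13 ≤ k

/-- The value of `r` in the level below a level in phase `k`. -/
def request (k : Fin 20) : Bool := 2 ≤ k && k ≤ 5 || 11 ≤ k && k ≤ 17

/-- The value of `a` in the level below a level in phase `k`. -/
def reply (k : Fin 20) : Bool := request (k - 1)

/-- The states the last level passes through in one cycle. -/
def bottomPhase (k : Fin 6) : Var → Bool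
  | .r => 1 ≤ k && k ≤ 3
  | .t => 2 ≤ k && k ≤ 4
  | .a => 3 ≤ k
  | _ => false

/-- The number of times a level in phase `k` has yet to start the level below before it is done with
the current request. -/
def rank (k : Fin 20) : ℕ := if k = 1 then 2 else if 2 ≤ k ∧ k ≤ 10 then 1 else 0

/-- The rank of the last level: whether it has yet to acknowledge the current request. -/
def bottomRank (k : Fin 6) : ℕ := if k = 1 ∨ k = 2 then 1 else 0

/-- A level in state `A` agrees with the phase `k` of the level above. -/
abbrev Answers (A : Var → Bool) (k : Fin 20) : Prop := A .r = request k ∧ A .a = reply k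

/-- The phase of a level, previously `k`, after a flip of the variable `c` of the level below. -/
def driverNext (k : Fin 20) (c : Var) : Fin 20 := if c = .r ∨ c = .a then k + 1 else k

/-- The phases in which a level waits for the level below to adopt a new request. -/
def Waiting (k : Fin 20) : Prop := k = 1 ∨ k = 5 ∨ k = 10 ∨ k = 17
  deriving Decidable

/-- A flip of `c` in a level in phase `k₂`, below a level in phase `k₁`, moves both levels on. -/
def Advances (k₁ k₂ : Fin 20) (c : Var) : Prop :=
  (flipAt (phase k₂) c = phase (k₂ + 1) ∧ request (k₂ + 1) = request k₂ ∧
    reply (k₂ + 1) = reply k₂) ∧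
  phase (driverNext k₁ c) = phase k₁ ∧ Answers (phase (k₂ + 1)) (driverNext k₁ c) ∧
  2 * rank k₁ + rank k₂ ≤ 2 * rank (driverNext k₁ c) + rank (k₂ + 1)
  deriving Decidable

/-- A flip of `c` in the last level, in phase `k₂`, below a level in phase `k₁`, moves both levels
on. -/
def BottomAdvances (k₁ : Fin 20) (k₂ : Fin 6) (c : Var) : Prop :=
  flipAt (bottomPhase k₂) c = bottomPhase (k₂ + 1) ∧
  phase (driverNext k₁ c) = phase k₁ ∧ Answers (bottomPhase (k₂ + 1)) (driverNext k₁ c) ∧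
  rank k₁ + bottomRank k₂ ≤ rank (driverNext k₁ c) + bottomRank (k₂ + 1) + 1
  deriving Decidable

/-- The change of energy when `c` is flipped in a level in phase `k₂`, at scale `g`, below a level
in phase `k₁`. -/
def flipCost (g : ℤ) (k₁ k₂ : Fin 20) (c : Var) : ℤ :=
  let E (A : Var → Bool) := levelEnergy (midCoeffs g) A (request k₂) (reply k₂) +
    levelEnergy (midCoeffs (2 * g)) (phase k₁) (A .r) (A .a)
  E (flipAt (phase k₂) c) - E (phase k₂)

/-- The change of energy when `c` is flipped in the last level, in phase `k₂`, below a level in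
phase `k₁`. -/
def bottomFlipCost (k₁ : Fin 20) (k₂ : Fin 6) (c : Var) : ℤ :=
  let E (A : Var → Bool) := levelEnergy bottomCoeffs A false false +
    levelEnergy (midCoeffs 1) (phase k₁) (A .r) (A .a)
  E (flipAt (bottomPhase k₂) c) - E (bottomPhase k₂)

theorem levelEnergy_midCoeffs (g : ℤ) (A : Var → Bool) (r' a' : Bool) :
    levelEnergy (midCoeffs g) A r' a' = levelEnergy (midCoeffs 0) A r' a' +
      g * (levelEnergy (midCoeffs 1) A r' a' - levelEnergy (midCoeffs 0) A r' a') := by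
  simp only [levelEnergy, midCoeffs]
  ring

theorem flipCost_eq (g : ℤ) (k₁ k₂ : Fin 20) (c : Var) : flipCost g k₁ k₂ c =
    flipCost 1 k₁ k₂ c + (g - 1) * (flipCost 1 k₁ k₂ c - flipCost 0 k₁ k₂ c) := by
  simp only [flipCost, levelEnergy_midCoeffs g, levelEnergy_midCoeffs (2 * _)]
  ring

theorem flipCost_neg {g : ℤ} (hg : 1 ≤ g) {k₁ k₂ : Fin 20} {c : Var}
    (h₁ : flipCost 1 k₁ k₂ c < 0) (h₀ : flipCost 1 k₁ k₂ c ≤ flipCost 0 k₁ k₂ c) :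
    flipCost g k₁ k₂ c < 0 := by
  rw [flipCost_eq]
  nlinarith

theorem flipCost_nonneg {g : ℤ} (hg : 1 ≤ g) {k₁ k₂ : Fin 20} {c : Var}
    (h₁ : 0 ≤ flipCost 1 k₁ k₂ c) (h₀ : flipCost 0 k₁ k₂ c ≤ flipCost 1 k₁ k₂ c) :
    0 ≤ flipCost g k₁ k₂ c := by
  rw [flipCost_eq]
  nlinarith

theorem advances_of_flipCost_neg {g : ℤ} (hg : 1 ≤ g) {k₁ k₂ : Fin 20} {c : Var}
    (h : Answers (phase k₂) k₁) (hc : flipCost g k₁ k₂ c < 0) : Advances k₁ k₂ c := by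
  have cert : ∀ k₁ k₂ : Fin 20, Answers (phase k₂) k₁ → ∀ c, Advances k₁ k₂ c ∨
      0 ≤ flipCost 1 k₁ k₂ c ∧ flipCost 0 k₁ k₂ c ≤ flipCost 1 k₁ k₂ c := by decide +kernel
  exact (cert k₁ k₂ h c).resolve_right fun ⟨h₁, h₀⟩ => hc.not_ge (flipCost_nonneg hg h₁ h₀)

theorem exists_flipCost_neg {g : ℤ} (hg : 1 ≤ g) {k₁ k₂ : Fin 20} (h : Answers (phase k₂) k₁)
    (hk₁ : request k₁ ≠ reply k₁) (hk₂ : request k₂ = reply k₂) (hw : ¬Waiting k₂) :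
    ∃ c, flipCost g k₁ k₂ c < 0 := by
  have cert : ∀ k₁ k₂ : Fin 20, Answers (phase k₂) k₁ → request k₁ ≠ reply k₁ →
      request k₂ = reply k₂ → ¬Waiting k₂ →
      ∃ c, flipCost 1 k₁ k₂ c < 0 ∧ flipCost 1 k₁ k₂ c ≤ flipCost 0 k₁ k₂ c := by decide +kernel
  obtain ⟨c, h₁, h₀⟩ := cert k₁ k₂ h hk₁ hk₂ hw
  exact ⟨c, flipCost_neg hg h₁ h₀⟩

theorem flipCost_r_neg {g : ℤ} (hg : 1 ≤ g) {k₁ k₂ : Fin 20} (h : Answers (phase k₂) k₁)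
    (hw : Waiting k₁) : flipCost g k₁ k₂ .r < 0 := by
  have cert : ∀ k₁ k₂ : Fin 20, Answers (phase k₂) k₁ → Waiting k₁ →
      flipCost 1 k₁ k₂ .r < 0 ∧ flipCost 1 k₁ k₂ .r ≤ flipCost 0 k₁ k₂ .r := by decide +kernel
  obtain ⟨h₁, h₀⟩ := cert k₁ k₂ h hw
  exact flipCost_neg hg h₁ h₀

theorem bottomAdvances_of_bottomFlipCost_neg : ∀ {k₁ : Fin 20} {k₂ : Fin 6} {c : Var},
    Answers (bottomPhase k₂) k₁ → bottomFlipCost k₁ k₂ c < 0 → BottomAdvances k₁ k₂ c := by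
  decide +kernel

theorem exists_bottomFlipCost_neg : ∀ {k₁ : Fin 20} {k₂ : Fin 6}, Answers (bottomPhase k₂) k₁ →
    request k₁ ≠ reply k₁ → ∃ c, bottomFlipCost k₁ k₂ c < 0 := by
  decide +kernel

theorem bottomFlipCost_r_neg : ∀ {k₁ : Fin 20} {k₂ : Fin 6}, Answers (bottomPhase k₂) k₁ →
    Waiting k₁ → bottomFlipCost k₁ k₂ .r < 0 := by
  decide +kernel

/-! ### The counter -/

/-- The coefficients of level `0`: the linear coefficient of `r` is that of an inner level below a
level whose only nonzero variable is `r`. -/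
def topCoeffs (g : ℤ) : Coeffs := { midCoeffs g with r := -1 }

/-- The coefficients of the levels of the counter. Scales double from each level to the one above
because a level goes through its cycle twice in each cycle of the level above. -/
def coeffs (n : ℕ) (i : Fin (n + 2)) : Coeffs :=
  if i = Fin.last (n + 1) then bottomCoeffs
  else if i = 0 then topCoeffs (2 ^ n) else midCoeffs (2 ^ (n - i : ℕ))

/-- The levels of the counter in state `X` are in the phases `κ 1, …, κ (n + 1)` and `β`. Here `κ i`
is the phase of the level above level `i`, so that `κ 0` belongs to a virtual level, in which only
`r` is nonzero. -/
structure IsConfig {n : ℕ} (X : Node n → Bool) (κ : Fin (n + 2) → Fin 20) (β : Fin 6) : Prop where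
  top : phase (κ 0) = phase 1
  level : ∀ j : Fin (n + 1), (fun v => X (j.castSucc, v)) = phase (κ j.succ)
  bottom : (fun v => X (Fin.last (n + 1), v)) = bottomPhase β
  answers : ∀ i, Answers (fun v => X (i, v)) (κ i)

/-- The rank of a configuration: a lower bound, up to an additive constant, on the number of flips
that remain. -/
def totalRank {n : ℕ} (κ : Fin (n + 2) → Fin 20) (β : Fin 6) : ℕ :=
  ∑ i : Fin (n + 2), 2 ^ (n + 1 - i : ℕ) * rank (κ i) + bottomRank β

theorem levelEnergy_topCoeffs (g : ℤ) (A : Var → Bool) (r' a' : Bool) :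
    levelEnergy (topCoeffs g) A r' a' = levelEnergy (midCoeffs g) A r' a' +
      levelEnergy (midCoeffs (2 * g)) (phase 1) (A .r) (A .a) - (80 * g - 12) := by
  have hr : phase 1 .r = true := rfl
  have hp : phase 1 .p = false := rfl
  have hq : phase 1 .q = false := rfl
  have hs : phase 1 .s = false := rfl
  have ht : phase 1 .t = false := rfl
  have ha : phase 1 .a = false := rfl
  simp only [levelEnergy, topCoeffs, midCoeffs, hr, hp, hq, hs, ht, ha, Bool.toInt_true,
    Bool.toInt_false]
  ring

section Counter

variable {n : ℕ} {X : Node n → Bool} {κ : Fin (n + 2) → Fin 20} {β : Fin 6}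

theorem coeffs_last : coeffs n (Fin.last (n + 1)) = bottomCoeffs := if_pos rfl

theorem coeffs_zero : coeffs n 0 = topCoeffs (2 ^ n) := by simp [coeffs, Fin.ext_iff]

theorem coeffs_succ (j : Fin n) : coeffs n j.castSucc.succ = midCoeffs (2 ^ (n - (j + 1) : ℕ)) := by
  simp [coeffs, ← Fin.succ_last]

theorem levelEnergy_bottomCoeffs (A : Var → Bool) (r' a' : Bool) :
    levelEnergy bottomCoeffs A r' a' = levelEnergy bottomCoeffs A false false := by
  simp [levelEnergy, bottomCoeffs]

theorem levelEnergy_coeffs_sub (j : Fin (n + 1)) (A : Var → Bool) (r' a' r a : Bool) :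
    levelEnergy (coeffs n j.castSucc) A r' a' - levelEnergy (coeffs n j.castSucc) A r a =
      levelEnergy (midCoeffs (2 ^ (n - j : ℕ))) A r' a' -
        levelEnergy (midCoeffs (2 ^ (n - j : ℕ))) A r a := by
  cases j using Fin.cases with
  | zero => simp [coeffs_zero, levelEnergy_topCoeffs]
  | succ j => simp [coeffs_succ]

theorem IsConfig.energy_flipAt_castSucc (h : IsConfig X κ β) (j : Fin (n + 1)) (c : Var) :
    energy (coeffs n) (flipAt X (j.castSucc, c)) - energy (coeffs n) X =
      flipCost (2 ^ (n - j : ℕ)) (κ j.castSucc) (κ j.succ) c := by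
  have hbelow : X (j.succ, .r) = request (κ j.succ) ∧ X (j.succ, .a) = reply (κ j.succ) :=
    h.answers j.succ
  rw [energy_flipAt_sub _ _ _ _ (h.level j) rfl, Fin.coeSucc_eq_succ, hbelow.1, hbelow.2, flipCost]
  cases j using Fin.cases with
  | zero =>
    have : (0 : Fin (n + 2)) - 1 = Fin.last (n + 1) := by
      rw [sub_eq_iff_eq_add, Fin.last_add_one]
    simp [this, coeffs_last, coeffs_zero, levelEnergy_topCoeffs, h.top,
      levelEnergy_bottomCoeffs _ (_ : Bool)]
  | succ j =>
    have hscale : (2 : ℤ) ^ (n - j : ℕ) = 2 * 2 ^ (n - (j + 1) : ℕ) := by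
      rw [← pow_succ']
      congr 1
      lia
    have : j.succ.castSucc - 1 = j.castSucc.castSucc := by
      rw [sub_eq_iff_eq_add, Fin.coeSucc_eq_succ, Fin.succ_castSucc]
    rw [this, levelEnergy_coeffs_sub, h.level, Fin.castSucc_succ, coeffs_succ]
    simp only [Fin.val_castSucc, Fin.val_succ, hscale]
    ring

theorem IsConfig.energy_flipAt_last (h : IsConfig X κ β) (c : Var) :
    energy (coeffs n) (flipAt X (Fin.last (n + 1), c)) - energy (coeffs n) X =
      bottomFlipCost (κ (Fin.last (n + 1))) β c := by
  have : Fin.last (n + 1) - 1 = (Fin.last n).castSucc := by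
    rw [sub_eq_iff_eq_add, Fin.coeSucc_eq_succ, Fin.succ_last]
  rw [energy_flipAt_sub _ _ _ _ h.bottom rfl, this, levelEnergy_coeffs_sub, h.level]
  simp only [coeffs_last, bottomFlipCost, levelEnergy_bottomCoeffs _ (X _), Fin.succ_last,
    Fin.val_last, tsub_self, pow_zero]
  ring

theorem totalRank_le_totalRank {κ' : Fin (n + 2) → Fin 20} (β : Fin 6) {j : Fin (n + 1)}
    (hne : ∀ i, i ≠ j.castSucc → i ≠ j.succ → κ' i = κ i)
    (hle : 2 * rank (κ j.castSucc) + rank (κ j.succ) ≤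
      2 * rank (κ' j.castSucc) + rank (κ' j.succ)) :
    totalRank κ β ≤ totalRank κ' β := by
  have hsum (κ : Fin (n + 2) → Fin 20) := sum_sdiff (f := fun i : Fin (n + 2) =>
    2 ^ (n + 1 - i : ℕ) * rank (κ i)) (subset_univ {j.castSucc, j.succ})
  have hrest : ∑ i ∈ univ \ {j.castSucc, j.succ}, 2 ^ (n + 1 - i : ℕ) * rank (κ' i) =
      ∑ i ∈ univ \ {j.castSucc, j.succ}, 2 ^ (n + 1 - i : ℕ) * rank (κ i) :=
    sum_congr rfl fun i hi => by
      simp only [mem_sdiff, mem_univ, mem_insert, mem_singleton, not_or, true_and] at hi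
      rw [hne i hi.1 hi.2]
  have hpow : 2 ^ (n + 1 - j : ℕ) = 2 * 2 ^ (n - j : ℕ) := by
    rw [← pow_succ']
    congr 1
    lia
  have hpair : j.castSucc ≠ j.succ := Fin.castSucc_lt_succ.ne
  rw [totalRank, totalRank, ← hsum, ← hsum, hrest, sum_pair hpair, sum_pair hpair]
  simp only [Fin.val_castSucc, Fin.val_succ, Nat.add_sub_add_right, hpow]
  nlinarith [Nat.mul_le_mul_left (2 ^ (n - j : ℕ)) hle]

theorem IsConfig.flipAt_castSucc (h : IsConfig X κ β) (j : Fin (n + 1)) {c : Var}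
    (hadv : Advances (κ j.castSucc) (κ j.succ) c) :
    ∃ κ', IsConfig (flipAt X (j.castSucc, c)) κ' β ∧ totalRank κ β ≤ totalRank κ' β := by
  obtain ⟨⟨hflip, hreq, hrep⟩, hphase, hans, hrank⟩ := hadv
  set κ' := Function.update (Function.update κ j.succ (κ j.succ + 1)) j.castSucc
    (driverNext (κ j.castSucc) c)
  have hne : j.castSucc ≠ j.succ := Fin.castSucc_lt_succ.ne
  have hdriver : κ' j.castSucc = driverNext (κ j.castSucc) c := by simp [κ']
  have hself : κ' j.succ = κ j.succ + 1 := by simp [κ', hne.symm]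
  have hother {i} (h₁ : i ≠ j.castSucc) (h₂ : i ≠ j.succ) : κ' i = κ i := by simp [κ', h₁, h₂]
  have hphase' {i} (hi : i ≠ j.succ) : phase (κ' i) = phase (κ i) := by
    obtain rfl | h₁ := eq_or_ne i j.castSucc
    · rw [hdriver, hphase]
    · rw [hother h₁ hi]
  refine ⟨κ', ⟨(hphase' (Fin.succ_ne_zero j).symm).trans h.top, fun j' => ?_, ?_, fun i => ?_⟩, ?_⟩
  · obtain rfl | hj := eq_or_ne j' j
    · rw [flipAt_level_self, h.level, hself, hflip]
    · rw [hphase' (by simpa using hj), ← h.level]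
      simp [flipAt_level_of_ne, hj]
  · rw [← h.bottom]
    simp [flipAt_level_of_ne, (Fin.castSucc_ne_last j).symm]
  · obtain rfl | h₁ := eq_or_ne i j.castSucc
    · rw [flipAt_level_self, h.level, hdriver, hflip]
      exact hans
    · simp only [Answers, flipAt_level_of_ne _ h₁]
      obtain rfl | h₂ := eq_or_ne i j.succ
      · rw [hself, hreq, hrep]
        exact h.answers _
      · rw [hother h₁ h₂]
        exact h.answers _
  · exact totalRank_le_totalRank β (fun _ => hother) (by rwa [hdriver, hself])

theorem IsConfig.flipAt_last (h : IsConfig X κ β) {c : Var}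
    (hadv : BottomAdvances (κ (Fin.last (n + 1))) β c) :
    ∃ κ' β', IsConfig (flipAt X (Fin.last (n + 1), c)) κ' β' ∧
      totalRank κ β ≤ totalRank κ' β' + 1 := by
  obtain ⟨hflip, hphase, hans, hrank⟩ := hadv
  set κ' := Function.update κ (Fin.last (n + 1)) (driverNext (κ (Fin.last (n + 1))) c)
  have hdriver : κ' (Fin.last (n + 1)) = driverNext (κ (Fin.last (n + 1))) c := by simp [κ']
  have hother {i} (hi : i ≠ Fin.last (n + 1)) : κ' i = κ i := by simp [κ', hi]
  have hphase' (i) : phase (κ' i) = phase (κ i) := by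
    obtain rfl | hi := eq_or_ne i (Fin.last (n + 1))
    · rw [hdriver, hphase]
    · rw [hother hi]
  refine ⟨κ', β + 1, ⟨(hphase' 0).trans h.top, fun j => ?_, ?_, fun i => ?_⟩, ?_⟩
  · simp only [hphase', ← h.level, flipAt_level_of_ne _ (Fin.castSucc_ne_last j)]
  · rw [flipAt_level_self, h.bottom, hflip]
  · obtain rfl | hi := eq_or_ne i (Fin.last (n + 1))
    · rw [flipAt_level_self, h.bottom, hdriver, hflip]
      exact hans
    · simp only [Answers, flipAt_level_of_ne _ hi, hother hi]
      exact h.answers i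
  · have hother' (i : Fin (n + 1)) : κ' i.castSucc = κ i.castSucc := hother (Fin.castSucc_ne_last i)
    simp only [totalRank, Fin.sum_univ_castSucc, hdriver, hother', Fin.val_last, tsub_self,
      pow_zero]
    lia

theorem IsConfig.exists_flipAt (h : IsConfig X κ β) {u : Fin (n + 2) × Var}
    (hu : energy (coeffs n) (flipAt X u) < energy (coeffs n) X) :
    ∃ κ' β', IsConfig (flipAt X u) κ' β' ∧ totalRank κ β ≤ totalRank κ' β' + 1 := by
  obtain ⟨i, c⟩ := u
  rw [← sub_neg] at hu
  cases i using Fin.lastCases with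
  | last =>
    rw [h.energy_flipAt_last] at hu
    exact h.flipAt_last (bottomAdvances_of_bottomFlipCost_neg (h.bottom ▸ h.answers _) hu)
  | cast j =>
    rw [h.energy_flipAt_castSucc] at hu
    obtain ⟨κ', hκ', hle⟩ := h.flipAt_castSucc j
      (advances_of_flipCost_neg (one_le_pow₀ one_le_two) (h.level j ▸ h.answers _) hu)
    exact ⟨κ', β, hκ', by lia⟩

section LocalMin

variable (h : IsConfig X κ β) (hmin : ∀ u, energy (coeffs n) X ≤ energy (coeffs n) (flipAt X u))
include h hmin

theorem IsConfig.not_waiting (i : Fin (n + 2)) : ¬Waiting (κ i) := by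
  intro hw
  refine (hmin (i, .r)).not_gt (sub_neg.1 ?_)
  cases i using Fin.lastCases with
  | last =>
    rw [h.energy_flipAt_last]
    exact bottomFlipCost_r_neg (h.bottom ▸ h.answers _) hw
  | cast j =>
    rw [h.energy_flipAt_castSucc]
    exact flipCost_r_neg (one_le_pow₀ one_le_two) (h.level j ▸ h.answers _) hw

theorem IsConfig.request_eq_reply (i : Fin (n + 2)) : request (κ i) = reply (κ i) := by
  by_contra hne
  suffices ∃ c, energy (coeffs n) (flipAt X (i, c)) - energy (coeffs n) X < 0 by
    obtain ⟨c, hc⟩ := this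
    exact (hmin (i, c)).not_gt (sub_neg.1 hc)
  induction i using Fin.reverseInduction with
  | last =>
    simp only [h.energy_flipAt_last]
    exact exists_bottomFlipCost_neg (h.bottom ▸ h.answers _) hne
  | cast j ih =>
    have hbelow : request (κ j.succ) = reply (κ j.succ) := by
      by_contra hne'
      obtain ⟨c, hc⟩ := ih hne'
      exact (hmin (j.succ, c)).not_gt (sub_neg.1 hc)
    simp only [h.energy_flipAt_castSucc]
    exact exists_flipCost_neg (one_le_pow₀ one_le_two) (h.level j ▸ h.answers _) hne hbelow
      (h.not_waiting hmin _)

theorem IsConfig.totalRank_eq : totalRank κ β = 2 ^ (n + 1) := by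
  have hra (i) : X (i, .r) = X (i, .a) :=
    (h.answers i).1.trans ((h.request_eq_reply hmin i).trans (h.answers i).2.symm)
  have hbottom : bottomRank β = 0 := by
    have cert : ∀ β, bottomPhase β .r = bottomPhase β .a → bottomRank β = 0 := by decide
    exact cert β (h.bottom ▸ hra _)
  have hlevel (j : Fin (n + 1)) : rank (κ j.succ) = 0 := by
    have cert : ∀ k, phase k .r = phase k .a → rank k = 0 := by decide
    exact cert _ (h.level j ▸ hra _)
  have htop : rank (κ 0) = 1 := by
    have cert : ∀ k, phase k = phase 1 → ¬Waiting k → rank k = 1 := by decide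
    exact cert _ h.top (h.not_waiting hmin 0)
  simp [totalRank, Fin.sum_univ_succ, hbottom, hlevel, htop]

end LocalMin

variable (n) in
theorem isConfig_start : IsConfig (fun _ : Node n => false) (Function.update 0 0 1) 0 where
  top := by rw [Function.update_self]
  level j := by
    rw [Function.update_of_ne (Fin.succ_ne_zero j)]
    ext v
    cases v <;> rfl
  bottom := by
    ext v
    cases v <;> rfl
  answers i := by
    cases i using Fin.cases with
    | zero => exact ⟨rfl, rfl⟩
    | succ j =>
      rw [Function.update_of_ne (Fin.succ_ne_zero j)]
      exact ⟨rfl, rfl⟩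

variable (n) in
theorem totalRank_start :
    totalRank (Function.update 0 0 1 : Fin (n + 2) → Fin 20) 0 = 2 ^ (n + 2) := by
  have h₀ : rank 0 = 0 := rfl
  have h₁ : rank 1 = 2 := rfl
  have hβ : bottomRank 0 = 0 := rfl
  simp [totalRank, Fin.sum_univ_succ, h₀, h₁, hβ, pow_succ]

end Counter

/-! ### Exponential lower bound -/

theorem exists_fin_forall_maximalImprovingSwapSeq_two_pow_le_length {k r : ℕ} (hr : 3 ≤ r)
    (hk : 4 * r ≤ k) (hk' : k < 6 * r) (n : ℕ) :
    ∃ (w : Sym2 (Fin (36 * r * (n + 2))) → ℝ) (τ₀ : Equiv.Perm (Fin (36 * r * (n + 2)))),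
      (∀ e, 0 ≤ w e) ∧ IsTour τ₀ ∧
        ∀ l, MaximalImprovingSwapSeq w k τ₀ l → 2 ^ (n + 1) ≤ l.length := by
  obtain ⟨d, rfl⟩ := Nat.exists_eq_add_of_le' hr
  have hcard : Fintype.card (Vertex (Node n) (d + 2)) = 36 * (d + 3) * (n + 2) := by
    have : Fintype.card Var = 6 := rfl
    rw [card_vertex, Fintype.card_prod, Fintype.card_prod, Fintype.card_fin, Fintype.card_fin, this]
    ring
  refine exists_fin_forall_maximalImprovingSwapSeq_le_length hcard <|
    exists_forall_maximalImprovingSwapSeq_le_length sameCycle_counterWalk hk hk'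
      (fun τ x y => stepCost (coeffs n) τ x y)
      (rank := fun X m => ∃ κ β, IsConfig X κ β ∧ totalRank κ β - 2 ^ (n + 1) = m)
      ?_ ?_ ⟨_, _, isConfig_start n, ?_⟩
  · rintro X u m ⟨κ, β, h, rfl⟩ hu
    simp only [walkEnergy_stepCost, Int.cast_lt] at hu
    obtain ⟨κ', β', h', hle⟩ := h.exists_flipAt hu
    exact ⟨_, ⟨κ', β', h', rfl⟩, by lia⟩
  · rintro X m ⟨κ, β, h, rfl⟩ hmin
    simp only [walkEnergy_stepCost, Int.cast_le] at hmin
    rw [h.totalRank_eq hmin, tsub_self]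
  · rw [totalRank_start, pow_succ, mul_two, Nat.add_sub_cancel]

theorem tsp_kopt_all_exp_of_thirteen_le_general (k : ℕ) (hk : 12 ≤ k) : TSPKOptAllExp k := by
  set r := k / 4
  have hr : 3 ≤ r := by lia
  have hr' : (0 : ℝ) < 72 * r := by positivity
  refine ⟨2 ^ (1 / (72 * r) : ℝ), Real.one_lt_rpow one_lt_two (by positivity), fun N =>
    ⟨36 * r * (N + 2), by nlinarith, ?_⟩⟩
  obtain ⟨w, τ₀, hw, hτ₀, hl⟩ := exists_fin_forall_maximalImprovingSwapSeq_two_pow_le_length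
    (k := k) hr (by lia) (by lia) N
  refine ⟨w, τ₀, hw, hτ₀, fun l hmax => ?_⟩
  have hexp : 1 / (72 * r : ℝ) * (36 * r * (N + 2) : ℕ) ≤ (N + 1 : ℕ) := by
    rw [div_mul_eq_mul_div, div_le_iff₀ hr']
    push_cast
    nlinarith [mul_nonneg r.cast_nonneg N.cast_nonneg (α := ℝ)]
  calc (2 ^ (1 / (72 * r) : ℝ) : ℝ) ^ (36 * r * (N + 2))
      = 2 ^ (1 / (72 * r : ℝ) * (36 * r * (N + 2) : ℕ)) :=
        (Real.rpow_mul_natCast zero_le_two _ _).symm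
    _ ≤ 2 ^ ((N + 1 : ℕ) : ℝ) := Real.rpow_le_rpow_of_exponent_le one_le_two hexp
    _ = 2 ^ (N + 1) := Real.rpow_natCast _ _
    _ ≤ l.length := by exact_mod_cast hl l hmax

/-- TSP/k-Opt has the all-exp property for every k ≥ 13. -/
theorem tsp_kopt_all_exp_of_thirteen_le (k : ℕ) (hk : 13 ≤ k) : TSPKOptAllExp k :=
  tsp_kopt_all_exp_of_thirteen_le_general k (by lia)
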